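/- arXiv:math/9910145 — 3 statements merged into one kernel-verified Lean document; each statement's English description precedes it below -/
import Mathlib

section
/- There exists a constant C > 0 (depending on A) such that for every integer N ≥ 3, ord(A,N) ≤ C·N·log log N. -/
open Matrix

/-- `matOrd A N` is the order of `A` modulo `N`: the least `k ≥ 1`
with `A^k ≡ I (mod N)`. -/
noncomputable def matOrd (A : Matrix (Fin 2) (Fin 2) ℤ) (N : ℕ) : ℕ :=
  sInf {k | 0 < k ∧ ∀ i j, (N : ℤ) ∣ (A ^ k - 1) i j}

abbrev redM (N : ℕ) : Matrix (Fin 2) (Fin 2) ℤ →+* Matrix (Fin 2) (Fin 2) (ZMod N) :=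
  (Int.castRingHom (ZMod N)).mapMatrix

lemma redM_iff (N : ℕ) (A : Matrix (Fin 2) (Fin 2) ℤ) (k : ℕ) :
    (∀ i j, (N : ℤ) ∣ (A ^ k - 1) i j) ↔ (redM N A) ^ k = 1 := by
  have h : (redM N A) ^ k = 1 ↔ redM N (A ^ k - 1) = 0 := by
    rw [map_sub, map_pow, map_one, sub_eq_zero]
  rw [h, ← Matrix.ext_iff]
  refine forall_congr' fun i => forall_congr' fun j => ?_
  simp only [redM, RingHom.mapMatrix_apply, Matrix.map_apply, Matrix.zero_apply,
    eq_intCast]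
  exact (ZMod.intCast_zmod_eq_zero_iff_dvd _ N).symm

lemma prime_two (A : Matrix (Fin 2) (Fin 2) (ZMod 2)) (hA : A.det = 1) : A ^ 6 = 1 := by
  revert A
  have : ∀ a b c d : ZMod 2, (!![a, b; c, d]).det = 1 → (!![a, b; c, d]) ^ 6 = 1 := by
    intro a b c d h
    rw [Matrix.det_fin_two_of] at h
    have e : (!![a, b; c, d]) ^ 6 = (!![a, b; c, d] * !![a, b; c, d] * !![a, b; c, d]) *
      (!![a, b; c, d] * !![a, b; c, d] * !![a, b; c, d]) := by noncomm_ring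
    rw [e, Matrix.one_fin_two]
    simp only [Matrix.mul_fin_two]
    revert a b c d
    decide
  intro A hA
  rw [Matrix.eta_fin_two A] at hA ⊢
  exact this _ _ _ _ hA

lemma prime_odd (p : ℕ) (hp : p.Prime) (h2 : p ≠ 2) (A : Matrix (Fin 2) (Fin 2) (ZMod p))
    (hA : A.det = 1) : ∃ m, 0 < m ∧ m ≤ p ∧ A ^ (2 * m) = 1 := by
  have : Fact p.Prime := ⟨hp⟩
  obtain ⟨q, hq⟩ := hp.odd_of_ne_two h2
  have hp2 := hp.two_le
  set t := A.trace with ht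
  have two_ne : (2 : ZMod p) ≠ 0 := by
    intro h
    have : ((2 : ℕ) : ZMod p) = 0 := by exact_mod_cast h
    rw [ZMod.natCast_eq_zero_iff] at this
    exact h2 ((Nat.prime_dvd_prime_iff_eq hp Nat.prime_two).1 this)
  have hCH : A * A = t • A - 1 := by
    rw [ht]
    rw [Matrix.det_fin_two] at hA
    ext i j
    fin_cases i <;> fin_cases j <;>
      simp [Matrix.mul_apply, Fin.sum_univ_two, Matrix.trace_fin_two] <;>
      first | linear_combination (-1 : ZMod p) * hA | ring
  have hCH' : A * (t • (1 : Matrix (Fin 2) (Fin 2) (ZMod p)) - A) = 1 := by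
    rw [mul_sub, hCH]; simp
  have hu : IsUnit A := by
    rw [Matrix.isUnit_iff_isUnit_det, hA]; exact isUnit_one
  set B := (2 : ZMod p) • A - t • (1 : Matrix (Fin 2) (Fin 2) (ZMod p)) with hB
  have hB2 : B ^ 2 = (t ^ 2 - 4) • (1 : Matrix (Fin 2) (Fin 2) (ZMod p)) := by
    rw [pow_two, hB]
    simp only [sub_mul, mul_sub, smul_mul_assoc, mul_smul_comm, hCH, one_mul, mul_one]
    module
  have hBp : B ^ p = (2 : ZMod p) • A ^ p - t • (1 : Matrix (Fin 2) (Fin 2) (ZMod p)) := by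
    rw [hB, sub_pow_char_of_commute (p := p), smul_pow, smul_pow, ZMod.pow_card, ZMod.pow_card, one_pow]
    exact ((Commute.one_right A).smul_left _).smul_right _
  have hBq : B ^ p = ((t ^ 2 - 4) ^ q) • B := by
    have : B ^ p = (B ^ 2) ^ q * B := by rw [← pow_mul, ← pow_succ, ← hq]
    rw [this, hB2, smul_pow, one_pow, smul_mul_assoc, one_mul]
  rw [hBp] at hBq
  have hinj : ∀ X Y : Matrix (Fin 2) (Fin 2) (ZMod p), (2 : ZMod p) • X = (2 : ZMod p) • Y → X = Y :=
    fun X Y h => smul_right_injective _ two_ne h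
  by_cases hD : t ^ 2 - 4 = 0
  · refine ⟨p, by omega, le_rfl, ?_⟩
    have hq0 : q ≠ 0 := by omega
    rw [hD, zero_pow hq0, zero_smul, sub_eq_zero] at hBq
    have h4 : (2 : ZMod p) • (2 : ZMod p) • A ^ (2 * p) =
        (2 : ZMod p) • (2 : ZMod p) • (1 : Matrix (Fin 2) (Fin 2) (ZMod p)) := by
      have : ((2 : ZMod p) • A ^ p) * ((2 : ZMod p) • A ^ p) =
        (t • (1 : Matrix (Fin 2) (Fin 2) (ZMod p))) * (t • (1 : Matrix (Fin 2) (Fin 2) (ZMod p))) := by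
        rw [hBq]
      simp only [smul_mul_assoc, mul_smul_comm, ← pow_add, mul_one] at this
      rw [two_mul, this, smul_smul, smul_smul]
      congr 1
      linear_combination hD
    exact hinj _ _ (hinj _ _ h4)
  · have hpq : p / 2 = q := by omega
    rcases ZMod.pow_div_two_eq_neg_one_or_one p hD with h | h
    · rw [hpq] at h
      rw [h, one_smul, hB] at hBq
      have : A ^ p = A := hinj _ _ (sub_left_injective hBq)
      refine ⟨q, by omega, by omega, ?_⟩
      apply hu.mul_left_cancel
      rw [← pow_succ', ← hq, this, mul_one]
    · rw [hpq] at h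
      rw [h, hB] at hBq
      have : A ^ p = t • (1 : Matrix (Fin 2) (Fin 2) (ZMod p)) - A := by
        apply hinj
        have := sub_eq_iff_eq_add.1 hBq
        rw [this]; module
      refine ⟨q + 1, by omega, by omega, ?_⟩
      rw [show 2 * (q + 1) = p + 1 by omega, pow_succ', this, hCH']

lemma lift_pow (p k n : ℕ) (hp : p.Prime) (hk : 1 ≤ k) (A : Matrix (Fin 2) (Fin 2) ℤ)
    (h : redM (p ^ k) A ^ n = 1) : redM (p ^ (k + 1)) A ^ (n * p) = 1 := by
  rw [← redM_iff] at h ⊢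
  choose E hE using h
  have hAn : A ^ n = 1 + ((p : ℤ) ^ k) • (Matrix.of E) := by
    rw [← sub_eq_iff_eq_add']
    ext i j
    rw [hE]; simp
  obtain ⟨r, hr⟩ := Commute.exists_add_pow_prime_eq hp
    (Commute.one_left (((p : ℤ) ^ k) • (Matrix.of E)))
  obtain ⟨l, hl⟩ : ∃ l, k * p = k + 1 + l := Nat.exists_eq_add_of_le (by nlinarith [hp.two_le])
  have key : A ^ (n * p) - 1 = ((p : ℤ) ^ (k + 1)) • (((p : ℤ) ^ l) • (Matrix.of E) ^ p +
      Matrix.of E * r) := by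
    rw [pow_mul, hAn, hr, one_pow, smul_pow, ← pow_mul, hl, mul_one, smul_add, smul_smul,
      ← pow_add, add_assoc, add_sub_cancel_left, ← nsmul_eq_mul, smul_mul_assoc, smul_mul_assoc,
      ← natCast_zsmul, smul_smul, pow_succ' _ k]
  intro i j
  rw [key, Matrix.smul_apply]
  exact ⟨_, by push_cast; rfl⟩

lemma prime_pow (A : Matrix (Fin 2) (Fin 2) ℤ) (p n k : ℕ) (hp : p.Prime)
    (h : redM p A ^ n = 1) : redM (p ^ (k + 1)) A ^ (n * p ^ k) = 1 := by
  induction k with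
  | zero =>
    rw [← redM_iff] at h ⊢
    simpa using h
  | succ k ih =>
    have := lift_pow p (k + 1) _ hp (by omega) A ih
    rwa [mul_assoc, ← pow_succ] at this

lemma det_red (A : Matrix (Fin 2) (Fin 2) ℤ) (hA : A.det = 1) (N : ℕ) : (redM N A).det = 1 := by
  rw [redM, ← RingHom.map_det, hA, map_one]

lemma main_bound (A : Matrix (Fin 2) (Fin 2) ℤ) (hA : A.det = 1) (N : ℕ) : 0 < N →
    ∃ m, 0 < m ∧ 2 * m ≤ 3 * N ∧ (Odd N → m ≤ N) ∧ redM N A ^ (2 * m) = 1 := by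
  induction N using Nat.recOnPosPrimePosCoprime with
  | zero => intro h; omega
  | one =>
    intro _
    refine ⟨1, by norm_num, by norm_num, fun _ => le_rfl, ?_⟩
    rw [← redM_iff]; simp
  | prime_pow p n hp hn =>
    intro _
    obtain ⟨k, rfl⟩ : ∃ k, n = k + 1 := ⟨n - 1, by omega⟩
    have hpk : 0 < p ^ k := pow_pos hp.pos k
    by_cases h2 : p = 2
    · subst h2
      refine ⟨3 * 2 ^ k, by positivity, by rw [pow_succ]; omega, ?_, ?_⟩
      · intro h
        rw [pow_succ] at h
        exact absurd h (by simp)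
      · rw [← mul_assoc]
        exact prime_pow A 2 6 k hp (prime_two _ (det_red A hA 2))
    · obtain ⟨m, hm, hmp, h⟩ := prime_odd p hp h2 _ (det_red A hA p)
      have hle : m * p ^ k ≤ p ^ (k + 1) := by
        rw [pow_succ']; exact Nat.mul_le_mul_right _ hmp
      refine ⟨m * p ^ k, by positivity, by omega, fun _ => hle, ?_⟩
      rw [← mul_assoc]
      exact prime_pow A p _ k hp h
  | coprime a b ha hb hab iha ihb =>
    intro _
    obtain ⟨m, hm, hm3, hmo, h⟩ := iha (by omega)
    obtain ⟨n, hn, hn3, hno, h'⟩ := ihb (by omega)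
    refine ⟨m * n, by positivity, ?_, ?_, ?_⟩
    · rcases Nat.even_or_odd a with he | ho
      · have hbo : Odd b := by
          rw [← Nat.not_even_iff_odd]
          intro hbe
          have := Nat.dvd_gcd he.two_dvd hbe.two_dvd
          rw [hab] at this
          omega
        have := Nat.mul_le_mul hm3 (hno hbo)
        nlinarith
      · have := Nat.mul_le_mul (hmo ho) hn3
        nlinarith
    · intro h
      rw [Nat.odd_mul] at h
      exact Nat.mul_le_mul (hmo h.1) (hno h.2)
    · have e1 : redM a A ^ (2 * (m * n)) = 1 := by rw [← mul_assoc, pow_mul, h, one_pow]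
      have e2 : redM b A ^ (2 * (m * n)) = 1 := by
        rw [mul_comm m n, ← mul_assoc, pow_mul, h', one_pow]
      rw [← redM_iff] at e1 e2 ⊢
      intro i j
      push_cast
      exact IsCoprime.mul_dvd (Nat.isCoprime_iff_coprime.2 hab) (e1 i j) (e2 i j)

/-- There is `C > 0` (depending on `A`) such that for all `N ≥ 3`,
`ord(A,N) ≤ C · N · log log N`. -/
theorem order_upper_bound
    (A : Matrix (Fin 2) (Fin 2) ℤ) (hA : A.det = 1) (htr : 2 < |A.trace|) :
    ∃ C : ℝ, 0 < C ∧ ∀ N : ℕ, 3 ≤ N →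
      (matOrd A N : ℝ) ≤ C * N * Real.log (Real.log N) := by
  have h1 : 1 < Real.log 3 := by
    rw [Real.lt_log_iff_exp_lt (by norm_num)]
    exact Real.exp_one_lt_three
  have h0 : 0 < Real.log (Real.log 3) := Real.log_pos h1
  refine ⟨3 / Real.log (Real.log 3), by positivity, fun N hN => ?_⟩
  obtain ⟨m, hm, hm3, -, h⟩ := main_bound A hA N (by omega)
  rw [← redM_iff] at h
  have hle : matOrd A N ≤ 3 * N := by
    refine le_trans ?_ hm3
    unfold matOrd
    exact Nat.sInf_le ⟨by omega, h⟩
  have hle' : (matOrd A N : ℝ) ≤ 3 * N := by exact_mod_cast hle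
  have hN' : (3 : ℝ) ≤ N := by exact_mod_cast hN
  have hlog : Real.log (Real.log 3) ≤ Real.log (Real.log N) :=
    Real.log_le_log (by linarith) (Real.log_le_log (by norm_num) hN')
  calc (matOrd A N : ℝ) ≤ 3 * N := hle'
    _ = 3 / Real.log (Real.log 3) * N * Real.log (Real.log 3) := by field_simp
    _ ≤ _ := by gcongr
end

section
/- There is a constant C > 0 such that for all sufficiently large x, the number of integers N ≤ x for which L(N) has a prime factor exceeding (log log x)³ is at most C·x/log log x. -/
open Matrix Finset

/-- The squarefree part `d` of `N = d·s²`, where `s²` is the largest square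
dividing `N`. -/
noncomputable def sqfPart (N : ℕ) : ℕ :=
  ∏ p ∈ N.primeFactors, p ^ (N.factorization p % 2)

/-- `d₀(N) = d / gcd(d, D_A)` where `N = d·s²` with `d` squarefree and
`D_A = 4(tr(A)² - 4)`. -/
noncomputable def dZero (A : Matrix (Fin 2) (Fin 2) ℤ) (N : ℕ) : ℕ :=
  sqfPart N / Nat.gcd (sqfPart N) (4 * (A.trace ^ 2 - 4)).natAbs

open Classical in
/-- `χ(p) = 1` if `tr(A)² - 4` is a nonzero square mod `p`, `-1` otherwise. -/
noncomputable def chi (A : Matrix (Fin 2) (Fin 2) ℤ) (p : ℕ) : ℤ :=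
  if ((A.trace ^ 2 - 4 : ℤ) : ZMod p) ≠ 0 ∧ IsSquare ((A.trace ^ 2 - 4 : ℤ) : ZMod p)
  then 1 else -1

/-- `L(N) = (∏_{p ∣ d₀(N)} (p - χ(p))) / lcm{p - χ(p) : p ∣ d₀(N)}`. -/
noncomputable def LN (A : Matrix (Fin 2) (Fin 2) ℤ) (N : ℕ) : ℕ :=
  (∏ p ∈ (dZero A N).primeFactors, ((p : ℤ) - chi A p).natAbs) /
    (dZero A N).primeFactors.lcm (fun p => ((p : ℤ) - chi A p).natAbs)

lemma ap_count (m : ℕ) (hm : 0 < m) (l a : ℤ) (hc : IsCoprime (m : ℤ) l) (A B : ℤ) (hAB : A ≤ B) :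
    |(((Finset.Ico A B).filter (fun k => (m : ℤ) ∣ k * l + a)).card : ℝ) - ((B : ℝ) - A) / m| ≤ 1 := by
  obtain ⟨u, v, huv⟩ := hc
  have h1 : (Finset.Ico A B).filter (fun k => (m : ℤ) ∣ k * l + a)
      = (Finset.Ico A B).filter (fun k => k ≡ -(a * v) [ZMOD m]) := by
    apply Finset.filter_congr
    intro k _
    rw [Int.modEq_comm, Int.modEq_iff_dvd]
    constructor
    · rintro ⟨c, hc⟩
      refine ⟨c * v + k * u, ?_⟩
      linear_combination v * hc - k * huv
    · rintro ⟨c, hc⟩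
      refine ⟨l * c + a * u, ?_⟩
      linear_combination l * hc - a * huv
  rw [h1]
  have hm' : (0 : ℤ) < m := by exact_mod_cast hm
  have h2 := Int.Ico_filter_modEq_card A B hm' (-(a * v))
  have hmq : (0 : ℚ) < m := by exact_mod_cast hm
  rw [max_eq_left (by
    rw [sub_nonneg]
    apply Int.ceil_le_ceil
    have : (A : ℚ) ≤ B := by exact_mod_cast hAB
    gcongr)] at h2
  set S := (Finset.Ico A B).filter (fun k => k ≡ -(a * v) [ZMOD m])
  have h3 : |((S.card : ℤ) : ℚ) - ((B : ℚ) - A) / m| ≤ 1 := by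
    rw [h2]
    push_cast
    set X : ℚ := ((B : ℚ) - -(a * v)) / m with hX
    set Y : ℚ := ((A : ℚ) - -(a * v)) / m with hY
    have e : ((B : ℚ) - A) / m = X - Y := by rw [hX, hY]; ring
    rw [e, abs_le]
    have := Int.le_ceil X
    have := Int.le_ceil Y
    have := Int.ceil_lt_add_one X
    have := Int.ceil_lt_add_one Y
    constructor <;> linarith
  have h4 : ((|((S.card : ℤ) : ℚ) - ((B : ℚ) - A) / m| : ℚ) : ℝ) ≤ ((1 : ℚ) : ℝ) := by
    exact_mod_cast h3
  push_cast at h4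
  exact h4

/-- `y_h = μ(h)/h` (up to normalisation) and the associated sieve weight. -/
noncomputable def svW (D : Finset ℕ) (d : ℕ) : ℝ :=
  ∑ h ∈ D, if d ∣ h then (ArithmeticFunction.moebius (h / d) : ℝ) * ((ArithmeticFunction.moebius h : ℝ) / h) else 0

noncomputable def svT (D : Finset ℕ) : ℝ := ∑ d ∈ D, (1 : ℝ) / d

lemma moebius_sum (t : ℕ) :
    ∑ e ∈ t.divisors, (ArithmeticFunction.moebius (t / e) : ℝ) = if t = 1 then 1 else 0 := by
  rw [Nat.sum_div_divisors t (fun e => (ArithmeticFunction.moebius e : ℝ))]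
  have := congrArg (fun f => f t) (ArithmeticFunction.coe_zeta_mul_moebius)
  simp only [ArithmeticFunction.coe_zeta_mul_apply, ArithmeticFunction.one_apply] at this
  have h := congrArg (fun z : ℤ => (z : ℝ)) this
  simpa using h

lemma moebius_inner (D : Finset ℕ) (hdc : ∀ d ∈ D, ∀ e, e ∣ d → e ∈ D) (h0 : 0 ∉ D) (g h : ℕ) (hg : g ∈ D)
    (hh : h ∈ D) :
    (∑ d ∈ D, if g ∣ d ∧ d ∣ h then (ArithmeticFunction.moebius (h / d) : ℝ) else 0)
      = if h = g then 1 else 0 := by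
  have hg0 : g ≠ 0 := fun e => h0 (e ▸ hg)
  have hh0 : h ≠ 0 := fun e => h0 (e ▸ hh)
  by_cases hgh : g ∣ h
  · obtain ⟨t, rfl⟩ := hgh
    have ht0 : t ≠ 0 := by rintro rfl; simp at hh0
    have e1 : (if g * t = g then (1 : ℝ) else 0) = if t = 1 then 1 else 0 := by
      simp [hg0]
    rw [e1, ← moebius_sum t, ← Finset.sum_filter]
    symm
    apply Finset.sum_bij (fun e _ => g * e)
    · intro e he
      have := Nat.dvd_of_mem_divisors he
      simp only [Finset.mem_filter]
      exact ⟨hdc _ hh _ (Nat.mul_dvd_mul_left g this), Dvd.intro _ rfl, Nat.mul_dvd_mul_left g this⟩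
    · intro a _ b _ hab
      exact Nat.eq_of_mul_eq_mul_left (Nat.pos_of_ne_zero hg0) hab
    · intro b hb
      simp only [Finset.mem_filter] at hb
      obtain ⟨_, ⟨e, rfl⟩, h2⟩ := hb
      exact ⟨e, by simp [ht0]; exact Nat.dvd_of_mul_dvd_mul_left (Nat.pos_of_ne_zero hg0) h2, rfl⟩
    · intro e he
      rw [Nat.mul_div_mul_left _ _ (Nat.pos_of_ne_zero hg0)]
  · rw [if_neg (by rintro rfl; exact hgh dvd_rfl)]
    apply Finset.sum_eq_zero
    intro d _
    rw [if_neg]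
    rintro ⟨h1, h2⟩
    exact hgh (h1.trans h2)

lemma svW_inv (D : Finset ℕ) (hdc : ∀ d ∈ D, ∀ e, e ∣ d → e ∈ D) (h0 : 0 ∉ D) (g : ℕ) (hg : g ∈ D) :
    (∑ d ∈ D, if g ∣ d then svW D d else 0) = (ArithmeticFunction.moebius g : ℝ) / g := by
  have : ∀ d ∈ D, (if g ∣ d then svW D d else 0) = ∑ h ∈ D, (if g ∣ d ∧ d ∣ h then (ArithmeticFunction.moebius (h / d) : ℝ) else 0) * ((ArithmeticFunction.moebius h : ℝ) / h) := by
    intro d _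
    by_cases hd : g ∣ d
    · simp [hd, svW]
    · simp [hd]
  rw [Finset.sum_congr rfl this, Finset.sum_comm]
  have : ∀ h ∈ D, (∑ d ∈ D, (if g ∣ d ∧ d ∣ h then (ArithmeticFunction.moebius (h / d) : ℝ) else 0) * ((ArithmeticFunction.moebius h : ℝ) / h)) = if h = g then ((ArithmeticFunction.moebius h : ℝ) / h) else 0 := by
    intro h hh
    rw [← Finset.sum_mul, moebius_inner D hdc h0 g h hg hh]
    split_ifs <;> simp
  rw [Finset.sum_congr rfl this]
  simp [hg]

lemma gcd_sum (D : Finset ℕ) (hdc : ∀ d ∈ D, ∀ e, e ∣ d → e ∈ D) (h0 : 0 ∉ D) (d e : ℕ) (hd : d ∈ D) :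
    ((Nat.gcd d e : ℕ) : ℝ) = ∑ g ∈ D, (if g ∣ d then (1:ℝ) else 0) * (if g ∣ e then 1 else 0) * (Nat.totient g : ℝ) := by
  have hd0 : d ≠ 0 := fun e => h0 (e ▸ hd)
  conv_lhs => rw [← Nat.sum_totient (Nat.gcd d e)]
  push_cast
  have : ∀ g ∈ D, (if g ∣ d then (1:ℝ) else 0) * (if g ∣ e then 1 else 0) * (Nat.totient g : ℝ) =
      if g ∣ d ∧ g ∣ e then (Nat.totient g : ℝ) else 0 := by
    intro g _
    by_cases h1 : g ∣ d <;> by_cases h2 : g ∣ e <;> simp [h1, h2]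
  rw [Finset.sum_congr rfl this, ← Finset.sum_filter]
  apply Finset.sum_congr _ (fun _ _ => rfl)
  ext g
  simp only [Nat.mem_divisors, Finset.mem_filter, Nat.dvd_gcd_iff]
  constructor
  · rintro ⟨⟨h1, h2⟩, _⟩
    exact ⟨hdc _ hd _ h1, h1, h2⟩
  · rintro ⟨_, h1, h2⟩
    exact ⟨⟨h1, h2⟩, by simp [hd0]⟩

lemma sv_quad (D : Finset ℕ) (hdc : ∀ d ∈ D, ∀ e, e ∣ d → e ∈ D) (h0 : 0 ∉ D) :
    ∑ d ∈ D, ∑ e ∈ D, ((d : ℝ) * svW D d) * (e * svW D e) / (Nat.lcm d e : ℕ) ≤ svT D := by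
  have h1 : ∀ d ∈ D, ∀ e ∈ D, ((d : ℝ) * svW D d) * (e * svW D e) / (Nat.lcm d e : ℕ) =
      ∑ g ∈ D, (Nat.totient g : ℝ) * ((if g ∣ d then svW D d else 0) * (if g ∣ e then svW D e else 0)) := by
    intro d hd e he
    have hd0 : (d : ℝ) ≠ 0 := by intro h; apply h0; have : d = 0 := by exact_mod_cast h
                                 exact this ▸ hd
    have he0 : (e : ℝ) ≠ 0 := by intro h; apply h0; have : e = 0 := by exact_mod_cast h
                                 exact this ▸ he
    have hl : ((Nat.gcd d e : ℕ) : ℝ) * (Nat.lcm d e : ℕ) = d * e := by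
      exact_mod_cast Nat.gcd_mul_lcm d e
    have hl0 : ((Nat.lcm d e : ℕ) : ℝ) ≠ 0 := by
      intro h; rw [h, mul_zero] at hl; exact mul_ne_zero hd0 he0 hl.symm
    have : ((d : ℝ) * svW D d) * (e * svW D e) / (Nat.lcm d e : ℕ) = (Nat.gcd d e : ℕ) * (svW D d * svW D e) := by
      rw [div_eq_iff hl0]
      linear_combination (-svW D d * svW D e) * hl
    rw [this, gcd_sum D hdc h0 d e hd, Finset.sum_mul]
    apply Finset.sum_congr rfl
    intro g _
    by_cases h1 : g ∣ d <;> by_cases h2 : g ∣ e <;> simp [h1, h2]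
  rw [Finset.sum_congr rfl (fun d hd => Finset.sum_congr rfl (h1 d hd))]
  have h2 : ∑ d ∈ D, ∑ e ∈ D, ∑ g ∈ D, (Nat.totient g : ℝ) * ((if g ∣ d then svW D d else 0) * (if g ∣ e then svW D e else 0))
      = ∑ g ∈ D, (Nat.totient g : ℝ) * ((ArithmeticFunction.moebius g : ℝ) / g) ^ 2 := by
    rw [Finset.sum_congr rfl (fun d _ => Finset.sum_comm), Finset.sum_comm]
    apply Finset.sum_congr rfl
    intro g hg
    rw [← svW_inv D hdc h0 g hg, sq, Finset.sum_mul_sum, Finset.mul_sum]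
    apply Finset.sum_congr rfl
    intro d _
    rw [Finset.mul_sum]
  rw [h2, svT]
  apply Finset.sum_le_sum
  intro g hg
  have hg0 : (0 : ℝ) < g := by
    have : g ≠ 0 := fun e => h0 (e ▸ hg)
    exact_mod_cast Nat.pos_of_ne_zero this
  have ht : (Nat.totient g : ℝ) ≤ g := by exact_mod_cast Nat.totient_le g
  have hm : (ArithmeticFunction.moebius g : ℝ) ^ 2 ≤ 1 := by
    have := ArithmeticFunction.abs_moebius_le_one (n := g)
    have : (|(ArithmeticFunction.moebius g)| : ℝ) ≤ 1 := by exact_mod_cast this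
    rw [← sq_abs]
    exact pow_le_one₀ (abs_nonneg _) this
  rw [div_pow, ← mul_div_assoc, div_le_div_iff₀ (by positivity) hg0]
  have : (Nat.totient g : ℝ) * (ArithmeticFunction.moebius g : ℝ) ^ 2 ≤ g * 1 := by gcongr
  nlinarith

lemma svW_abs (D : Finset ℕ) (d : ℕ) : |svW D d| ≤ svT D := by
  unfold svW svT
  refine (Finset.abs_sum_le_sum_abs _ _).trans (Finset.sum_le_sum fun h _ => ?_)
  have hb : ∀ n, |(ArithmeticFunction.moebius n : ℝ)| ≤ 1 := fun n => by
    exact_mod_cast ArithmeticFunction.abs_moebius_le_one (n := n)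
  split_ifs
  · rw [abs_mul, abs_div, Nat.abs_cast]
    calc _ ≤ 1 * ((1 : ℝ) / h) := by
          gcongr
          · exact hb _
          · exact hb _
      _ = _ := one_mul _
  · simp

lemma svW_one (D : Finset ℕ) (hsq : ∀ d ∈ D, Squarefree d) : svW D 1 = svT D := by
  unfold svW svT
  apply Finset.sum_congr rfl
  intro h hh
  have := ArithmeticFunction.moebius_sq_eq_one_of_squarefree (hsq h hh)
  have h2 : (ArithmeticFunction.moebius h : ℝ) ^ 2 = 1 := by exact_mod_cast this
  simp only [one_dvd, if_true, Nat.div_one]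
  rw [← h2]; ring
lemma svT_pos (D : Finset ℕ) (h1 : 1 ∈ D) : 1 ≤ svT D := by
  unfold svT
  have := Finset.single_le_sum (f := fun d : ℕ => (1 : ℝ) / d) (s := D) (fun i _ => by positivity) h1
  simpa using this

lemma sieve_bound (D : Finset ℕ) (hdc : ∀ d ∈ D, ∀ e, e ∣ d → e ∈ D) (h0 : 0 ∉ D)
    (hsq : ∀ d ∈ D, Squarefree d) (h1 : 1 ∈ D) (l a : ℤ) (hcop : ∀ d ∈ D, IsCoprime (d : ℤ) l)
    (A B : ℤ) (hAB : A ≤ B) (P : Finset ℤ) (hP : P ⊆ Finset.Ico A B)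
    (hPd : ∀ k ∈ P, ∀ d ∈ D, (d : ℤ) ∣ k * l + a → d = 1) :
    (P.card : ℝ) ≤ ((B : ℝ) - A) / svT D + (∑ d ∈ D, (d : ℝ)) ^ 2 := by
  have hT : 0 < svT D := lt_of_lt_of_le one_pos (svT_pos D h1)
  set w : ℕ → ℝ := fun d => (d : ℝ) * svW D d with hw
  have hwabs : ∀ d, |w d| ≤ d * svT D := by
    intro d
    simp only [hw, abs_mul, Nat.abs_cast]
    gcongr
    exact svW_abs D d
  have s1 : (P.card : ℝ) * svT D ^ 2 ≤
      ∑ k ∈ Finset.Ico A B, (∑ d ∈ D, if (d : ℤ) ∣ k * l + a then w d else 0) ^ 2 := by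
    calc (P.card : ℝ) * svT D ^ 2 = ∑ k ∈ P, svT D ^ 2 := by simp
      _ = ∑ k ∈ P, (∑ d ∈ D, if (d : ℤ) ∣ k * l + a then w d else 0) ^ 2 := by
          apply Finset.sum_congr rfl
          intro k hk
          congr 1
          rw [Finset.sum_eq_single_of_mem 1 h1]
          · simp [hw, svW_one D hsq]
          · intro d hd hd1
            rw [if_neg]
            intro h
            exact hd1 (hPd k hk d hd h)
      _ ≤ _ := Finset.sum_le_sum_of_subset_of_nonneg hP (fun _ _ _ => sq_nonneg _)
  have s2 : ∑ k ∈ Finset.Ico A B, (∑ d ∈ D, if (d : ℤ) ∣ k * l + a then w d else 0) ^ 2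
      = ∑ d ∈ D, ∑ e ∈ D, w d * w e *
        (((Finset.Ico A B).filter (fun k => ((Nat.lcm d e : ℕ) : ℤ) ∣ k * l + a)).card : ℝ) := by
    simp_rw [sq, Finset.sum_mul_sum]
    rw [Finset.sum_comm]
    apply Finset.sum_congr rfl
    intro d _
    rw [Finset.sum_comm]
    apply Finset.sum_congr rfl
    intro e _
    rw [Finset.card_filter]
    push_cast
    rw [Finset.mul_sum]
    apply Finset.sum_congr rfl
    intro k _
    have : ((Nat.lcm d e : ℕ) : ℤ) ∣ k * l + a ↔ (d : ℤ) ∣ k * l + a ∧ (e : ℤ) ∣ k * l + a := by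
      simp only [Int.natCast_dvd, Nat.lcm_dvd_iff]
    by_cases h1 : (d : ℤ) ∣ k * l + a <;> by_cases h2 : (e : ℤ) ∣ k * l + a <;> simp [this, h1, h2]
  have s3 : ∀ d ∈ D, ∀ e ∈ D, w d * w e *
        (((Finset.Ico A B).filter (fun k => ((Nat.lcm d e : ℕ) : ℤ) ∣ k * l + a)).card : ℝ)
      ≤ ((B : ℝ) - A) * (w d * w e / (Nat.lcm d e : ℕ)) + (d * svT D) * (e * svT D) := by
    intro d hd e he
    have hd0 : d ≠ 0 := fun e => h0 (e ▸ hd)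
    have he0 : e ≠ 0 := fun h => h0 (h ▸ he)
    have hc : IsCoprime ((Nat.lcm d e : ℕ) : ℤ) l := by
      apply IsCoprime.of_isCoprime_of_dvd_left ((hcop d hd).mul_left (hcop e he))
      exact_mod_cast Nat.lcm_dvd_mul d e
    have := ap_count (Nat.lcm d e) (Nat.lcm_pos (Nat.pos_of_ne_zero hd0) (Nat.pos_of_ne_zero he0)) l a hc A B hAB
    set c := (((Finset.Ico A B).filter (fun k => ((Nat.lcm d e : ℕ) : ℤ) ∣ k * l + a)).card : ℝ)
    have e1 : w d * w e * c = ((B : ℝ) - A) * (w d * w e / (Nat.lcm d e : ℕ)) +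
        (w d * w e) * (c - ((B : ℝ) - A) / (Nat.lcm d e : ℕ)) := by ring
    rw [e1]
    apply add_le_add le_rfl
    calc _ ≤ |(w d * w e) * (c - ((B : ℝ) - A) / (Nat.lcm d e : ℕ))| := le_abs_self _
      _ = |w d| * |w e| * |c - ((B : ℝ) - A) / (Nat.lcm d e : ℕ)| := by rw [abs_mul, abs_mul]
      _ ≤ (d * svT D) * (e * svT D) * 1 := by
          gcongr
          · exact hwabs d
          · exact hwabs e
      _ = _ := mul_one _
  have hBA : (0 : ℝ) ≤ (B : ℝ) - A := by
    rw [sub_nonneg]; exact_mod_cast hAB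
  have s4 : (P.card : ℝ) * svT D ^ 2 ≤ ((B : ℝ) - A) * svT D + (∑ d ∈ D, (d : ℝ)) ^ 2 * svT D ^ 2 := by
    rw [s2] at s1
    refine s1.trans ((Finset.sum_le_sum fun d hd => Finset.sum_le_sum (s3 d hd)).trans ?_)
    simp_rw [Finset.sum_add_distrib, ← Finset.mul_sum]
    apply add_le_add
    · gcongr
      exact sv_quad D hdc h0
    · apply le_of_eq
      rw [← Finset.sum_mul, ← Finset.sum_mul]
      ring
  have : ((B : ℝ) - A) / svT D + (∑ d ∈ D, (d : ℝ)) ^ 2 =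
    (((B : ℝ) - A) * svT D + (∑ d ∈ D, (d : ℝ)) ^ 2 * svT D ^ 2) / svT D ^ 2 := by
    field_simp
  rw [this, le_div_iff₀ (by positivity)]
  exact s4

/-- the sieve set -/
def sD (l z : ℕ) : Finset ℕ := (Finset.Icc 1 z).filter (fun d => Squarefree d ∧ Nat.Coprime d l)

lemma svT_lower (l z : ℕ) (hl : l.Prime) :
    ∑ n ∈ Finset.Icc 1 z, (1 : ℝ) / n ≤ 4 * svT (sD l z) := by
  classical
  have key : ∀ n ∈ Finset.Icc 1 z, ∃ t : ℕ × ℕ × ℕ, t ∈ (Finset.Ioo 0 (z+1)) ×ˢ (Finset.range 2) ×ˢ (sD l z) ∧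
      n = t.1 ^ 2 * (l ^ t.2.1 * t.2.2) := by
    intro n hn
    rw [Finset.mem_Icc] at hn
    obtain ⟨a, b, hab, hsq⟩ := Nat.sq_mul_squarefree n
    have hb0 : b ≠ 0 := by rintro rfl; simp at hab; omega
    have ha0 : a ≠ 0 := hsq.ne_zero
    have hbz : b ≤ n := by
      rw [← hab]
      calc b ≤ b ^ 2 := Nat.le_self_pow (by norm_num) b
        _ ≤ _ := Nat.le_mul_of_pos_right _ (Nat.pos_of_ne_zero ha0)
    have haz : a ≤ n := by
      rw [← hab]
      exact Nat.le_mul_of_pos_left _ (by positivity)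
    by_cases hla : l ∣ a
    · obtain ⟨c, rfl⟩ := hla
      have hc0 : c ≠ 0 := by rintro rfl; simp at ha0
      have hcz : c ≤ l * c := Nat.le_mul_of_pos_left _ hl.pos
      refine ⟨(b, 1, c), ?_, by simp [← hab]⟩
      simp only [Finset.mem_product, Finset.mem_Ioo, Finset.mem_range, sD, Finset.mem_filter, Finset.mem_Icc]
      refine ⟨⟨by omega, by omega⟩, by norm_num, ⟨by omega, by omega⟩, ?_⟩
      have := Nat.squarefree_mul_iff.1 hsq
      exact ⟨this.2.2, this.1.symm⟩
    · refine ⟨(b, 0, a), ?_, by simp [← hab]⟩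
      simp only [Finset.mem_product, Finset.mem_Ioo, Finset.mem_range, sD, Finset.mem_filter, Finset.mem_Icc]
      refine ⟨⟨by omega, by omega⟩, by norm_num, ⟨by omega, by omega⟩, hsq, ?_⟩
      exact ((Nat.Prime.coprime_iff_not_dvd hl).2 hla).symm
  choose! f hf hf2 using key
  have inj : Set.InjOn f (Finset.Icc 1 z : Finset ℕ) := by
    intro a ha b hb hab
    rw [hf2 a ha, hf2 b hb, hab]
  set F : ℕ × ℕ × ℕ → ℝ := fun t => ((t.1 : ℝ) ^ 2)⁻¹ * (((l : ℝ) ^ t.2.1)⁻¹ * ((1 : ℝ) / t.2.2)) with hF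
  have e1 : ∑ n ∈ Finset.Icc 1 z, (1 : ℝ) / n = ∑ n ∈ Finset.Icc 1 z, F (f n) := by
    apply Finset.sum_congr rfl
    intro n hn
    conv_lhs => rw [hf2 n hn]
    simp only [hF]
    push_cast
    rw [one_div, mul_inv, mul_inv, one_div]
  rw [e1, ← Finset.sum_image (f := F) inj]
  have e2 : ∑ t ∈ (Finset.Icc 1 z).image f, F t ≤ ∑ t ∈ (Finset.Ioo 0 (z+1)) ×ˢ (Finset.range 2) ×ˢ (sD l z), F t := by
    apply Finset.sum_le_sum_of_subset_of_nonneg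
    · intro t ht
      obtain ⟨n, hn, rfl⟩ := Finset.mem_image.1 ht
      exact hf n hn
    · intro t _ _
      simp only [hF]; positivity
  refine e2.trans ?_
  have e3 : ∑ t ∈ (Finset.Ioo 0 (z+1)) ×ˢ (Finset.range 2) ×ˢ (sD l z), F t =
      (∑ s ∈ Finset.Ioo 0 (z+1), ((s : ℝ) ^ 2)⁻¹) * ((∑ i ∈ Finset.range 2, ((l : ℝ) ^ i)⁻¹) * svT (sD l z)) := by
    rw [svT, Finset.sum_mul_sum, ← Finset.sum_product', Finset.sum_mul_sum, ← Finset.sum_product']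
  rw [e3]
  have b1 : (∑ s ∈ Finset.Ioo 0 (z+1), ((s : ℝ) ^ 2)⁻¹) ≤ 2 := by
    simpa using sum_Ioo_inv_sq_le (α := ℝ) 0 (z+1)
  have b2 : (∑ i ∈ Finset.range 2, ((l : ℝ) ^ i)⁻¹) ≤ 2 := by
    have : (1 : ℝ) ≤ l := by exact_mod_cast hl.one_le
    simp only [Finset.sum_range_succ, Finset.sum_range_zero, pow_zero, pow_one, inv_one]
    have := inv_le_one_of_one_le₀ this
    linarith
  have hT : 0 ≤ svT (sD l z) := by unfold svT; positivity
  calc _ ≤ 2 * (2 * svT (sD l z)) := by gcongr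
    _ = _ := by ring

lemma harm_pow (j : ℕ) : (j : ℝ) / 2 ≤ ∑ n ∈ Finset.Icc (1 : ℕ) (2 ^ j), (1 : ℝ) / (n : ℕ) := by
  have h := log_add_one_le_harmonic (2 ^ j)
  rw [harmonic_eq_sum_Icc] at h
  push_cast at h
  simp only [one_div]
  refine le_trans ?_ h
  have : Real.log (2 ^ j) ≤ Real.log (2 ^ j + 1) := Real.log_le_log (by positivity) (by linarith)
  rw [Real.log_pow] at this
  have h2 := Real.log_two_gt_d9
  have : (j : ℝ) * (1/2) ≤ j * Real.log 2 := by gcongr; linarith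
  linarith

/-- dyadic Brun–Titchmarsh -/
lemma dyadic_bt (l : ℕ) (hl : l.Prime) (a : ℤ) (ha : a = 1 ∨ a = -1) (i : ℕ) :
    (((Finset.Ico (2 ^ i) (2 ^ (i + 1))).filter (fun k : ℕ => ((k : ℤ) * l + a).natAbs.Prime)).card : ℝ)
      ≤ 1000 * 2 ^ i / (i + 1) := by
  classical
  set S := (Finset.Ico (2 ^ i) (2 ^ (i + 1))).filter (fun k : ℕ => ((k : ℤ) * l + a).natAbs.Prime) with hS
  by_cases hi : i < 8
  · have h1 : (S.card : ℝ) ≤ 2 ^ i := by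
      have : S.card ≤ (Finset.Ico (2 ^ i) (2 ^ (i + 1))).card := Finset.card_filter_le _ _
      rw [Nat.card_Ico, pow_succ] at this
      have h2 : S.card ≤ 2 ^ i := by omega
      exact_mod_cast h2
    rw [le_div_iff₀ (by positivity)]
    have : ((i : ℝ) + 1) ≤ 1000 := by
      have : (i : ℝ) ≤ 8 := by exact_mod_cast hi.le
      linarith
    calc _ ≤ (2 : ℝ) ^ i * 1000 := by gcongr
      _ = _ := by ring
  push Not at hi
  set j := i / 8 with hj
  have hj1 : 1 ≤ j := by omega
  set z := 2 ^ j with hz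
  have hdc : ∀ d ∈ sD l z, ∀ e, e ∣ d → e ∈ sD l z := by
    intro d hd e he
    simp only [sD, Finset.mem_filter, Finset.mem_Icc] at hd ⊢
    have hd0 : 0 < d := by omega
    have := Nat.le_of_dvd hd0 he
    have := Nat.pos_of_dvd_of_pos he hd0
    exact ⟨⟨by omega, by omega⟩, hd.2.1.squarefree_of_dvd he, Nat.Coprime.coprime_dvd_left he hd.2.2⟩
  have h0 : 0 ∉ sD l z := by simp [sD]
  have h1 : 1 ∈ sD l z := by
    simp [sD, hz, Nat.one_le_two_pow]
  have hsq : ∀ d ∈ sD l z, Squarefree d := fun d hd => (Finset.mem_filter.1 hd).2.1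
  have hcop : ∀ d ∈ sD l z, IsCoprime (d : ℤ) (l : ℤ) := fun d hd =>
    Nat.isCoprime_iff_coprime.2 (Finset.mem_filter.1 hd).2.2
  have hb := sieve_bound (sD l z) hdc h0 hsq h1 l a hcop (2 ^ i) (2 ^ (i + 1))
    (by rw [pow_succ]; have : (0:ℤ) < 2 ^ i := by positivity
        linarith) (S.image (fun k : ℕ => (k : ℤ))) (by
      intro k hk
      obtain ⟨n, hn, rfl⟩ := Finset.mem_image.1 hk
      rw [hS, Finset.mem_filter, Finset.mem_Ico] at hn
      rw [Finset.mem_Ico]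
      exact ⟨by exact_mod_cast hn.1.1, by exact_mod_cast hn.1.2⟩) (by
      intro k hk d hd hdvd
      obtain ⟨n, hn, rfl⟩ := Finset.mem_image.1 hk
      rw [hS, Finset.mem_filter, Finset.mem_Ico] at hn
      rw [Int.natCast_dvd] at hdvd
      rcases (Nat.dvd_prime hn.2).1 hdvd with h | h
      · exact h
      · exfalso
        have hdz : d ≤ z := by simp only [sD, Finset.mem_filter, Finset.mem_Icc] at hd; omega
        have hzi : z < 2 ^ i := Nat.pow_lt_pow_right (by norm_num) (by omega)
        have hl2 : (2 : ℤ) ≤ l := by exact_mod_cast hl.two_le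
        have hn1 : (2 ^ i : ℕ) ≤ n := hn.1.1
        have hn0 : (1 : ℤ) ≤ n := by
          have : 1 ≤ 2 ^ i := Nat.one_le_two_pow
          omega
        have : (n : ℤ) ≤ (n : ℤ) * l + a := by
          rcases ha with rfl | rfl <;> nlinarith
        omega)
  rw [Finset.card_image_of_injective _ Nat.cast_injective] at hb
  have hT : (j : ℝ) / 8 ≤ svT (sD l z) := by
    have h1 := harm_pow j
    have h2 := svT_lower l z hl
    rw [hz] at h2 ⊢
    linarith
  have hsum : ∑ d ∈ sD l z, (d : ℝ) ≤ (z : ℝ) ^ 2 := by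
    calc ∑ d ∈ sD l z, (d : ℝ) ≤ ∑ d ∈ Finset.Icc 1 z, (d : ℝ) :=
          Finset.sum_le_sum_of_subset_of_nonneg (Finset.filter_subset _ _) (fun _ _ _ => by positivity)
      _ ≤ ∑ d ∈ Finset.Icc 1 z, (z : ℝ) := Finset.sum_le_sum (fun d hd => by
          exact_mod_cast (Finset.mem_Icc.1 hd).2)
      _ = _ := by simp [sq]
  have hj0 : (0 : ℝ) < j := by exact_mod_cast hj1
  have hij : (i : ℝ) + 1 ≤ 16 * j := by
    have : i + 1 ≤ 16 * j := by omega
    exact_mod_cast this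
  push_cast at hb
  have e1 : (2 : ℝ) ^ (i + 1) - 2 ^ i = 2 ^ i := by rw [pow_succ]; ring
  rw [e1] at hb
  have t1 : (2 : ℝ) ^ i / svT (sD l z) ≤ 128 * 2 ^ i / (i + 1) := by
    calc (2 : ℝ) ^ i / svT (sD l z) ≤ 2 ^ i / (((i : ℝ) + 1) / 128) := by
          gcongr
          linarith
      _ = _ := by field_simp
  have t2 : (∑ d ∈ sD l z, (d : ℝ)) ^ 2 ≤ 16 * 2 ^ i / (i + 1) := by
    have hs0 : 0 ≤ ∑ d ∈ sD l z, (d : ℝ) := by positivity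
    have : (∑ d ∈ sD l z, (d : ℝ)) ^ 2 ≤ (2 : ℝ) ^ (4 * j) := by
      calc _ ≤ ((z : ℝ) ^ 2) ^ 2 := by gcongr
        _ = _ := by rw [hz]; push_cast; ring
    rw [le_div_iff₀ (by positivity)]
    have hjp : (j : ℝ) ≤ 2 ^ (4 * j) := by
      have : j < 2 ^ j := Nat.lt_two_pow_self
      have h3 : (2:ℕ) ^ j ≤ 2 ^ (4 * j) := Nat.pow_le_pow_right (by norm_num) (by omega)
      exact_mod_cast (this.le.trans h3)
    calc _ ≤ (2 : ℝ) ^ (4 * j) * (16 * 2 ^ (4 * j)) := by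
          gcongr
          linarith
      _ = 16 * 2 ^ (8 * j) := by ring
      _ ≤ _ := by
          gcongr
          · norm_num
          · omega
  calc (S.card : ℝ) ≤ _ := hb
    _ ≤ 128 * 2 ^ i / (i + 1) + 16 * 2 ^ i / (i + 1) := add_le_add t1 t2
    _ = 144 * 2 ^ i / (i + 1) := by ring
    _ ≤ _ := by gcongr; norm_num
lemma ap_recip (l : ℕ) (hl : l.Prime) (a : ℤ) (ha : a = 1 ∨ a = -1) (X : ℕ) :
    ∑ k ∈ (Finset.Icc 1 X).filter (fun k : ℕ => ((k : ℤ) * l + a).natAbs.Prime), (1 : ℝ) / k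
      ≤ 1000 * (1 + Real.log (Nat.log 2 X + 1)) := by
  classical
  set S := (Finset.Icc 1 X).filter (fun k : ℕ => ((k : ℤ) * l + a).natAbs.Prime) with hS
  have hmap : ∀ k ∈ S, Nat.log 2 k ∈ Finset.range (Nat.log 2 X + 1) := by
    intro k hk
    rw [hS, Finset.mem_filter, Finset.mem_Icc] at hk
    rw [Finset.mem_range]
    have := Nat.log_mono_right (b := 2) hk.1.2
    omega
  rw [← Finset.sum_fiberwise_of_maps_to hmap]
  have h1 : ∀ i ∈ Finset.range (Nat.log 2 X + 1),
      ∑ k ∈ S with Nat.log 2 k = i, (1 : ℝ) / k ≤ 1000 * ((i + 1 : ℕ) : ℝ)⁻¹ := by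
    intro i _
    have hsub : (S.filter (fun k => Nat.log 2 k = i)) ⊆
        (Finset.Ico (2 ^ i) (2 ^ (i + 1))).filter (fun k : ℕ => ((k : ℤ) * l + a).natAbs.Prime) := by
      intro k hk
      simp only [hS, Finset.mem_filter, Finset.mem_Icc] at hk
      obtain ⟨⟨⟨hk1, _⟩, hp⟩, rfl⟩ := hk
      simp only [Finset.mem_filter, Finset.mem_Ico]
      exact ⟨⟨Nat.pow_log_le_self 2 (by omega), Nat.lt_pow_succ_log_self (by norm_num) k⟩, hp⟩
    have hb := dyadic_bt l hl a ha i
    calc ∑ k ∈ S with Nat.log 2 k = i, (1 : ℝ) / k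
        ≤ ∑ k ∈ (Finset.Ico (2 ^ i) (2 ^ (i + 1))).filter (fun k : ℕ => ((k : ℤ) * l + a).natAbs.Prime), (1 : ℝ) / k :=
          Finset.sum_le_sum_of_subset_of_nonneg hsub (fun _ _ _ => by positivity)
      _ ≤ ∑ k ∈ (Finset.Ico (2 ^ i) (2 ^ (i + 1))).filter (fun k : ℕ => ((k : ℤ) * l + a).natAbs.Prime), (1 : ℝ) / 2 ^ i := by
          apply Finset.sum_le_sum
          intro k hk
          simp only [Finset.mem_filter, Finset.mem_Ico] at hk
          have : (2 : ℝ) ^ i ≤ k := by exact_mod_cast hk.1.1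
          gcongr
      _ = _ * ((1 : ℝ) / 2 ^ i) := by rw [Finset.sum_const, nsmul_eq_mul]
      _ ≤ (1000 * 2 ^ i / (i + 1)) * ((1 : ℝ) / 2 ^ i) := by gcongr
      _ = _ := by push_cast; field_simp
  refine (Finset.sum_le_sum h1).trans ?_
  rw [← Finset.mul_sum]
  gcongr
  have := harmonic_le_one_add_log (Nat.log 2 X + 1)
  unfold harmonic at this
  push_cast at this ⊢
  exact this

/-- primes up to `X` congruent to `a` mod `l` -/
def PA (l : ℕ) (a : ℤ) (X : ℕ) : Finset ℕ :=
  (Finset.Icc 1 X).filter (fun p => p.Prime ∧ (l : ℤ) ∣ (p : ℤ) - a)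

lemma PA_sum (l : ℕ) (hl : l.Prime) (a : ℤ) (ha : a = 1 ∨ a = -1) (X : ℕ) :
    ∑ p ∈ PA l a X, (1 : ℝ) / p ≤ 2000 * (1 + Real.log (Nat.log 2 X + 1)) / l := by
  classical
  have hl2 : (2 : ℤ) ≤ l := by exact_mod_cast hl.two_le
  set S := (Finset.Icc 1 X).filter (fun k : ℕ => ((k : ℤ) * l + a).natAbs.Prime) with hS
  have key : ∀ p ∈ PA l a X, ∃ k : ℕ, k ∈ S ∧ (p : ℤ) = k * l + a := by
    intro p hp
    simp only [PA, Finset.mem_filter, Finset.mem_Icc] at hp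
    obtain ⟨⟨_, hpX⟩, hpp, c, hc⟩ := hp
    have hp2 := hpp.two_le
    have hc0 : 0 < c := by
      by_contra h
      push Not at h
      have : (l : ℤ) * c ≤ 0 := by nlinarith
      rcases ha with rfl | rfl <;> omega
    lift c to ℕ using hc0.le
    have e : (p : ℤ) = c * l + a := by linear_combination hc
    refine ⟨c, ?_, e⟩
    rw [hS, Finset.mem_filter, Finset.mem_Icc]
    refine ⟨⟨by omega, ?_⟩, by rw [← e]; simpa using hpp⟩
    have : 2 * (c : ℤ) ≤ l * c := by nlinarith
    rcases ha with rfl | rfl <;> omega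
  choose! f hf hf2 using key
  have inj : Set.InjOn f (PA l a X : Finset ℕ) := by
    intro p hp q hq hpq
    have h1 := hf2 p hp
    have h2 := hf2 q hq
    rw [hpq, ← h2] at h1
    exact_mod_cast h1
  have hlR : (2 : ℝ) ≤ l := by exact_mod_cast hl.two_le
  calc ∑ p ∈ PA l a X, (1 : ℝ) / p ≤ ∑ p ∈ PA l a X, (2 / l : ℝ) * ((1 : ℝ) / (f p : ℕ)) := by
        apply Finset.sum_le_sum
        intro p hp
        have h1 := hf2 p hp
        have h2 := hf p hp
        rw [hS, Finset.mem_filter, Finset.mem_Icc] at h2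
        have hk : (1 : ℝ) ≤ (f p : ℕ) := by exact_mod_cast h2.1.1
        have h1R : (p : ℝ) = (f p : ℕ) * l + a := by exact_mod_cast h1
        have haR : (-1 : ℝ) ≤ a := by rcases ha with rfl | rfl <;> norm_num
        have hle : ((f p : ℕ) : ℝ) * l / 2 ≤ p := by nlinarith
        calc (1 : ℝ) / p ≤ 1 / (((f p : ℕ) : ℝ) * l / 2) := by gcongr
          _ = _ := by field_simp
    _ = (2 / l : ℝ) * ∑ k ∈ (PA l a X).image f, (1 : ℝ) / (k : ℕ) := by
        rw [Finset.sum_image inj, Finset.mul_sum]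
    _ ≤ (2 / l : ℝ) * ∑ k ∈ S, (1 : ℝ) / (k : ℕ) := by
        gcongr
        intro k hk
        obtain ⟨p, hp, rfl⟩ := Finset.mem_image.1 hk
        exact hf p hp
    _ ≤ (2 / l : ℝ) * (1000 * (1 + Real.log (Nat.log 2 X + 1))) := by
        gcongr
        exact ap_recip l hl a ha X
    _ = _ := by ring

lemma exists_pair (S : Finset ℕ) (f : ℕ → ℕ) (hf : ∀ p ∈ S, f p ≠ 0) (l : ℕ) (hl : l.Prime)
    (h : l ∣ (∏ p ∈ S, f p) / S.lcm f) :
    ∃ p ∈ S, ∃ q ∈ S, p ≠ q ∧ l ∣ f p ∧ l ∣ f q := by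
  classical
  have hlcm : S.lcm f ∣ ∏ p ∈ S, f p := Finset.lcm_dvd (fun p hp => Finset.dvd_prod_of_mem f hp)
  have h1 : l * S.lcm f ∣ ∏ p ∈ S, f p := by
    obtain ⟨c, hc⟩ := h
    refine ⟨c, ?_⟩
    have := Nat.div_mul_cancel hlcm
    rw [← this, hc]; ring
  have h2 : l ∣ ∏ p ∈ S, f p := (Dvd.intro _ rfl).trans h1
  obtain ⟨p, hp, hlp⟩ := (Prime.dvd_finsetProd_iff hl.prime f).1 h2
  have h3 : f p * l ∣ f p * ∏ q ∈ S.erase p, f q := by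
    rw [Finset.mul_prod_erase S f hp, mul_comm]
    exact (Nat.mul_dvd_mul_left l (Finset.dvd_lcm hp)).trans h1
  have h4 := Nat.dvd_of_mul_dvd_mul_left (Nat.pos_of_ne_zero (hf p hp)) h3
  obtain ⟨q, hq, hlq⟩ := (Prime.dvd_finsetProd_iff hl.prime f).1 h4
  exact ⟨p, hp, q, Finset.mem_of_mem_erase hq, (Finset.ne_of_mem_erase hq).symm, hlp, hlq⟩
lemma dZero_dvd (A : Matrix (Fin 2) (Fin 2) ℤ) (N p : ℕ) (hp : p ∈ (dZero A N).primeFactors) :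
    p.Prime ∧ p ∣ N := by
  have hpp := Nat.prime_of_mem_primeFactors hp
  refine ⟨hpp, ?_⟩
  have h1 : p ∣ sqfPart N :=
    (Nat.dvd_of_mem_primeFactors hp).trans (Nat.div_dvd_of_dvd (Nat.gcd_dvd_left _ _))
  obtain ⟨q, hq, h2⟩ := (Prime.dvd_finsetProd_iff hpp.prime _).1 h1
  exact (hpp.dvd_of_dvd_pow h2).trans (Nat.dvd_of_mem_primeFactors hq)

lemma chi_cases (A : Matrix (Fin 2) (Fin 2) ℤ) (p : ℕ) : chi A p = 1 ∨ chi A p = -1 := by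
  unfold chi
  split_ifs <;> simp

lemma loglog_bound (x : ℝ) (hx : 1 ≤ Real.log (Real.log x)) (hx1 : 1 ≤ x) (hlx : 1 ≤ Real.log x) :
    1 + Real.log (Nat.log 2 ⌊x⌋₊ + 1) ≤ 4 * Real.log (Real.log x) := by
  have hf : 0 < ⌊x⌋₊ := Nat.floor_pos.2 hx1
  have h1 : (2 : ℝ) ^ (Nat.log 2 ⌊x⌋₊) ≤ x := by
    have := Nat.pow_log_le_self 2 hf.ne'
    have h2 : ((2 ^ (Nat.log 2 ⌊x⌋₊) : ℕ) : ℝ) ≤ (⌊x⌋₊ : ℕ) := by exact_mod_cast this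
    have h3 := Nat.floor_le (zero_le_one.trans hx1)
    push_cast at h2
    linarith
  have h2 := Real.log_le_log (by positivity) h1
  rw [Real.log_pow] at h2
  have h3 := Real.log_two_gt_d9
  set n : ℝ := ((Nat.log 2 ⌊x⌋₊ : ℕ) : ℝ)
  have hn : 0 ≤ n := by positivity
  have h4 : n + 1 ≤ Real.exp 2 * Real.log x := by
    have : (3 : ℝ) ≤ Real.exp 2 := by
      have := Real.add_one_le_exp (2 : ℝ); linarith
    nlinarith
  have h5 := Real.log_le_log (by positivity) h4
  rw [Real.log_mul (Real.exp_ne_zero _) (by positivity), Real.log_exp] at h5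
  linarith

/-- For all large `x`, the number of `N ≤ x` such that `L(N)` has a prime
factor exceeding `(log log x)³` is `O(x / log log x)`. -/
theorem LN_smooth_for_most
    (A : Matrix (Fin 2) (Fin 2) ℤ) (hA : A.det = 1) (htr : 2 < |A.trace|) :
    ∃ C : ℝ, 0 < C ∧ ∃ x₀ : ℝ, ∀ x : ℝ, x₀ ≤ x →
      ({N : ℕ | 1 ≤ N ∧ (N : ℝ) ≤ x ∧
          ∃ ℓ : ℕ, ℓ.Prime ∧ Real.log (Real.log x) ^ 3 < (ℓ : ℝ) ∧ ℓ ∣ LN A N}.ncard : ℝ) ≤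
        C * x / Real.log (Real.log x) := by
  classical
  refine ⟨2 * 16000 ^ 2, by norm_num, Real.exp (Real.exp 1), ?_⟩
  intro x hx
  have he1 : (1 : ℝ) ≤ Real.exp 1 := Real.one_le_exp zero_le_one
  have hx1 : 1 ≤ x := (Real.one_le_exp (by positivity)).trans hx
  have hlx' : Real.exp 1 ≤ Real.log x := (Real.le_log_iff_exp_le (by positivity)).2 hx
  have hlx : 1 ≤ Real.log x := he1.trans hlx'
  have hll : 1 ≤ Real.log (Real.log x) := (Real.le_log_iff_exp_le (by positivity)).2 hlx'
  have hlb := loglog_bound x hll hx1 hlx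
  set LL := Real.log (Real.log x) with hLL
  set X := ⌊x⌋₊ with hX
  have hXx : (X : ℝ) ≤ x := Nat.floor_le (by positivity)
  set P : ℕ → Finset ℕ := fun l => PA l 1 X ∪ PA l (-1) X with hP
  have hPsum : ∀ l : ℕ, l.Prime → ∑ p ∈ P l, (1 : ℝ) / p ≤ 16000 * LL / l := by
    intro l hl
    have h1 := PA_sum l hl 1 (Or.inl rfl) X
    have h2 := PA_sum l hl (-1) (Or.inr rfl) X
    have h3 : ∑ p ∈ P l, (1 : ℝ) / p ≤ ∑ p ∈ PA l 1 X, (1 : ℝ) / p + ∑ p ∈ PA l (-1) X, (1 : ℝ) / p := by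
      rw [← Finset.sum_union_inter]
      have : (0 : ℝ) ≤ ∑ p ∈ PA l 1 X ∩ PA l (-1) X, (1 : ℝ) / p := by positivity
      simp only [hP]
      linarith
    have h4 : 2000 * (1 + Real.log (Nat.log 2 X + 1)) / l ≤ 2000 * (4 * LL) / (l : ℝ) := by gcongr
    calc _ ≤ 2000 * (4 * LL) / (l : ℝ) + 2000 * (4 * LL) / (l : ℝ) := by linarith
      _ = _ := by ring
  set Y := ⌊LL ^ 3⌋₊ with hY
  set Ls := (Finset.Ioo Y (X + 2)).filter Nat.Prime with hLs
  set M : ℕ → ℕ → Finset ℕ := fun p q => (Finset.Ioc 0 X).filter (fun N => p * q ∣ N) with hM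
  set U : Finset ℕ := Ls.biUnion (fun l => (P l ×ˢ P l).biUnion (fun t => M t.1 t.2)) with hU
  have hsub : {N : ℕ | 1 ≤ N ∧ (N : ℝ) ≤ x ∧
          ∃ ℓ : ℕ, ℓ.Prime ∧ LL ^ 3 < (ℓ : ℝ) ∧ ℓ ∣ LN A N} ⊆ (U : Set ℕ) := by
    rintro N ⟨hN1, hNx, l, hl, hlY, hdvd⟩
    have hNX : N ≤ X := Nat.le_floor hNx
    obtain ⟨p, hp, q, hq, hpq, hlp, hlq⟩ := exists_pair _ _ (by
      intro p hp
      have h2 := (dZero_dvd A N p hp).1.two_le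
      rcases chi_cases A p with h | h <;> rw [h] <;> omega) l hl hdvd
    have hmem : ∀ p, p ∈ (dZero A N).primeFactors → l ∣ ((p : ℤ) - chi A p).natAbs → p ∈ P l ∧ l ≤ X + 1 := by
      intro p hp hlp
      obtain ⟨hpp, hpN⟩ := dZero_dvd A N p hp
      have h2 := hpp.two_le
      have hpX : p ≤ X := (Nat.le_of_dvd (by omega) hpN).trans hNX
      have hle := Nat.le_of_dvd (by rcases chi_cases A p with h | h <;> rw [h] <;> omega) hlp
      have hz := Int.natCast_dvd.2 hlp
      rcases chi_cases A p with h | h <;> rw [h] at hle hz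
      · refine ⟨?_, by omega⟩
        simp only [hP, Finset.mem_union, PA, Finset.mem_filter, Finset.mem_Icc]
        exact Or.inl ⟨⟨by omega, hpX⟩, hpp, hz⟩
      · refine ⟨?_, by omega⟩
        simp only [hP, Finset.mem_union, PA, Finset.mem_filter, Finset.mem_Icc]
        exact Or.inr ⟨⟨by omega, hpX⟩, hpp, hz⟩
    obtain ⟨hpP, hlX⟩ := hmem p hp hlp
    obtain ⟨hqP, _⟩ := hmem q hq hlq
    obtain ⟨hpp, hpN⟩ := dZero_dvd A N p hp
    obtain ⟨hqp, hqN⟩ := dZero_dvd A N q hq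
    simp only [hU, Finset.coe_biUnion, Set.mem_iUnion, Finset.mem_coe, hLs, Finset.mem_filter, Finset.mem_Ioo]
    refine ⟨l, ⟨⟨(Nat.floor_lt (by positivity)).2 hlY, by omega⟩, hl⟩, (p, q), Finset.mem_product.2 ⟨hpP, hqP⟩, ?_⟩
    simp only [hM, Finset.mem_filter, Finset.mem_Ioc]
    exact ⟨⟨by omega, hNX⟩, Nat.Coprime.mul_dvd_of_dvd_of_dvd ((Nat.coprime_primes hpp hqp).2 hpq) hpN hqN⟩
  have hcard : {N : ℕ | 1 ≤ N ∧ (N : ℝ) ≤ x ∧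
          ∃ ℓ : ℕ, ℓ.Prime ∧ LL ^ 3 < (ℓ : ℝ) ∧ ℓ ∣ LN A N}.ncard ≤ U.card := by
    have := Set.ncard_le_ncard hsub U.finite_toSet
    rwa [Set.ncard_coe_finset] at this
  have hMc : ∀ p q : ℕ, ((M p q).card : ℝ) ≤ x * ((1 : ℝ) / p * (1 / q)) := by
    intro p q
    simp only [hM]
    rw [Nat.Ioc_filter_dvd_card_eq_div]
    calc ((X / (p * q) : ℕ) : ℝ) ≤ (X : ℝ) / ((p * q : ℕ) : ℝ) := Nat.cast_div_le
      _ ≤ x / ((p * q : ℕ) : ℝ) := by gcongr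
      _ = _ := by push_cast; ring
  have hUc : (U.card : ℝ) ≤ ∑ l ∈ Ls, ∑ t ∈ P l ×ˢ P l, ((M t.1 t.2).card : ℝ) := by
    have : U.card ≤ ∑ l ∈ Ls, ∑ t ∈ P l ×ˢ P l, (M t.1 t.2).card :=
      Finset.card_biUnion_le.trans (Finset.sum_le_sum fun l _ => Finset.card_biUnion_le)
    exact_mod_cast this
  calc _ ≤ (U.card : ℝ) := by exact_mod_cast hcard
    _ ≤ _ := hUc
    _ ≤ ∑ l ∈ Ls, x * (16000 * LL) ^ 2 * ((l : ℝ) ^ 2)⁻¹ := by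
        apply Finset.sum_le_sum
        intro l hl
        have hlp : l.Prime := (Finset.mem_filter.1 hl).2
        calc _ ≤ ∑ t ∈ P l ×ˢ P l, x * ((1 : ℝ) / (t.1 : ℕ) * (1 / (t.2 : ℕ))) :=
              Finset.sum_le_sum fun t _ => hMc t.1 t.2
          _ = x * (∑ p ∈ P l, (1 : ℝ) / p) ^ 2 := by
              rw [← Finset.mul_sum, sq, Finset.sum_mul_sum, ← Finset.sum_product']
          _ ≤ x * (16000 * LL / l) ^ 2 := by
              have : (0 : ℝ) ≤ ∑ p ∈ P l, (1 : ℝ) / p := by positivity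
              gcongr
              exact hPsum l hlp
          _ = _ := by rw [div_pow]; ring
    _ = x * (16000 * LL) ^ 2 * ∑ l ∈ Ls, ((l : ℝ) ^ 2)⁻¹ := by rw [Finset.mul_sum]
    _ ≤ x * (16000 * LL) ^ 2 * (2 / LL ^ 3) := by
        gcongr
        calc ∑ l ∈ Ls, ((l : ℝ) ^ 2)⁻¹ ≤ ∑ l ∈ Finset.Ioo Y (X + 2), ((l : ℝ) ^ 2)⁻¹ :=
              Finset.sum_le_sum_of_subset_of_nonneg (Finset.filter_subset _ _) (fun _ _ _ => by positivity)
          _ ≤ 2 / ((Y : ℝ) + 1) := sum_Ioo_inv_sq_le Y (X + 2)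
          _ ≤ _ := by
              have : LL ^ 3 < (Y : ℝ) + 1 := Nat.lt_floor_add_one _
              gcongr
    _ = _ := by field_simp
end

section
/- For every ε > 0 there is an x₀ such that for all x ≥ x₀, the number of integers N ≤ x with ord(A,N) < (∏_{p | d_0(N)} ord(A,p)) / exp(3·(log log x)⁴) is at most ε·x, where the product runs over the distinct prime divisors p of d_0(N). -/
open Matrix Finset

lemma fact_dvd_aux (m b n : ℕ) : n.factorial ∣ m ^ n * ∏ k ∈ range n, (m * k + b) := by
  rw [Nat.dvd_iff_prime_pow_dvd_dvd]
  intro p v hp hv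
  by_cases hpm : p ∣ m
  · have : v ≤ n := by
      by_contra hlt
      push Not at hlt
      have h1 : p ^ n ∣ n.factorial := (pow_dvd_pow p hlt.le).trans hv
      rcases Nat.eq_zero_or_pos n with h0 | h0
      · subst h0
        have : p ^ 1 ∣ 1 := (pow_dvd_pow p (by omega)).trans hv
        simp at this
        exact hp.one_lt.ne' this
      · have := Fact.mk hp
        have h2 := sub_one_mul_padicValNat_factorial_lt_of_ne_zero p (n := n) (by omega)
        have h3 : n ≤ padicValNat p n.factorial :=
          (padicValNat_dvd_iff_le (Nat.factorial_ne_zero n)).1 h1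
        have h4 : 1 ≤ p - 1 := by have := hp.two_le; omega
        nlinarith
    exact Dvd.dvd.mul_right ((pow_dvd_pow p this).trans (pow_dvd_pow_of_dvd hpm n)) _
  · apply Dvd.dvd.mul_left
    have hcop : Nat.Coprime m (p ^ v) :=
      Nat.Coprime.pow_right v ((Nat.Prime.coprime_iff_not_dvd hp).2 hpm).symm
    have : NeZero (p ^ v) := ⟨(pow_pos hp.pos v).ne'⟩
    set c : ℕ := ((b : ZMod (p ^ v)) * (m : ZMod (p ^ v))⁻¹).val with hc
    have hmc : (m : ZMod (p ^ v)) * c = b := by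
      rw [hc, ZMod.natCast_val, ZMod.cast_id', id]
      have := ZMod.coe_mul_inv_eq_one m hcop
      linear_combination (b : ZMod (p^v)) * this
    rw [← ZMod.natCast_eq_zero_iff]
    push_cast
    have : ∀ k ∈ range n, ((m : ZMod (p ^ v)) * k + b) = m * ((c + k : ℕ) : ZMod (p ^ v)) := by
      intro k _
      push_cast
      rw [← hmc]; ring
    rw [prod_congr rfl this, prod_mul_distrib, ← Nat.cast_prod (fun k => c + k), ← Nat.ascFactorial_eq_prod_range]
    have h2 : p ^ v ∣ c.ascFactorial n := hv.trans (Nat.factorial_dvd_ascFactorial _ _)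
    rw [(ZMod.natCast_eq_zero_iff _ _).2 h2, mul_zero]

lemma prod_primes_le (m b n : ℕ) (hm : 2 ≤ m) (hb : 0 < b) (hb' : b ≤ m + 1) (T : Finset ℕ)
    (hT : ∀ p ∈ T, p.Prime ∧ n < p ∧ ∃ k < n, p = m * k + b) :
    ∏ p ∈ T, p ≤ m ^ (3 * n) := by
  obtain ⟨Y, hY⟩ := fact_dvd_aux m b n
  have h1 : ∏ p ∈ T, p ∣ m ^ n * ∏ k ∈ range n, (m * k + b) := by
    apply Finset.prod_primes_dvd
    · intro p hp; exact (hT p hp).1.prime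
    · intro p hp
      obtain ⟨k, hk, hpk⟩ := (hT p hp).2.2
      apply Dvd.dvd.mul_left
      rw [hpk]
      exact Finset.dvd_prod_of_mem (fun k => m * k + b) (mem_range.2 hk)
  have hcop : Nat.Coprime (∏ p ∈ T, p) n.factorial := by
    apply Nat.Coprime.prod_left
    intro p hp
    obtain ⟨a, b, _⟩ := hT p hp
    rw [Nat.coprime_factorial_iff a.ne_one]
    rwa [a.minFac_eq]
  rw [hY] at h1
  have h2 := hcop.dvd_of_dvd_mul_left h1
  have hpos : 0 < m ^ n * ∏ k ∈ range n, (m * k + b) := by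
    apply Nat.mul_pos (by positivity)
    exact Finset.prod_pos (fun k _ => by omega)
  have hYpos : 0 < Y := by
    rw [hY] at hpos
    exact Nat.pos_of_mul_pos_left hpos
  refine (Nat.le_of_dvd hYpos h2).trans ?_
  have h3 : n.factorial * Y ≤ n.factorial * (m ^ n * (m + 1) ^ n) := by
    rw [← hY]
    have : ∏ k ∈ range n, (m * k + b) ≤ ∏ k ∈ range n, ((m + 1) * (k + 1)) :=
      Finset.prod_le_prod' (fun k _ => by nlinarith)
    rw [prod_mul_distrib, prod_range_add_one_eq_factorial] at this
    simp at this
    calc _ ≤ m ^ n * ((m + 1) ^ n * n.factorial) := Nat.mul_le_mul_left _ this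
      _ = _ := by ring
  have h4 := Nat.le_of_mul_le_mul_left h3 n.factorial_pos
  refine h4.trans ?_
  rw [pow_mul, ← mul_pow]
  apply Nat.pow_le_pow_left
  have : m + 1 ≤ m * m := by nlinarith
  calc m * (m + 1) ≤ m * (m * m) := Nat.mul_le_mul_left _ this
    _ = m ^ 3 := by ring

/-- primes congruent to plus or minus one -/
def TT (m X : ℕ) : Finset ℕ :=
  (range (X + 1)).filter (fun p => p.Prime ∧ Odd p ∧ (m ∣ p - 1 ∨ m ∣ p + 1))

lemma block_aux (m b i X : ℕ) (hm : 2 ≤ m) (hi : 1 ≤ i) (hb : 0 < b) (hb' : b ≤ m + 1)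
    (T : Finset ℕ)
    (hT : ∀ p ∈ T, p.Prime ∧ Odd p ∧ Nat.log 2 p = i ∧ ∃ k < 2 ^ (i + 1) / m, p = m * k + b) :
    (T.card : ℝ) * (i * Real.log 2) ≤ 3 * (2 ^ (i + 1) / m) * Real.log m := by
  set n := 2 ^ (i + 1) / m with hn
  have hn2 : n ≤ 2 ^ i := by
    rw [hn]
    calc 2 ^ (i + 1) / m ≤ 2 ^ (i + 1) / 2 := Nat.div_le_div_left hm (by norm_num)
      _ = 2 ^ i := by rw [pow_succ]; simp
  have hge : ∀ p ∈ T, 2 ^ i ≤ p := by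
    intro p hp
    obtain ⟨h1, h2, h3, h4⟩ := hT p hp
    rw [← h3]
    exact Nat.pow_log_le_self 2 h1.ne_zero
  have h1 := prod_primes_le m b n hm hb hb' T (by
    intro p hp
    obtain ⟨h1, h2, h3, h4⟩ := hT p hp
    refine ⟨h1, ?_, h4⟩
    refine lt_of_le_of_ne (hn2.trans (hge p hp)) ?_
    intro h
    have h5 := hge p hp
    have h6 : p = 2 ^ i := le_antisymm (h ▸ hn2) h5
    rw [h6] at h2
    have : Even (2 ^ i) := (Nat.even_pow' (by omega)).2 (by norm_num)
    exact (Nat.not_even_iff_odd.2 h2) this)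
  have h2 : (2 ^ i) ^ T.card ≤ m ^ (3 * n) := by
    refine le_trans ?_ h1
    exact Finset.pow_card_le_prod T (fun p => p) _ (fun p hp => hge p hp)
  have h3 : (((2:ℝ) ^ i) ^ T.card) ≤ (m:ℝ) ^ (3 * n) := by exact_mod_cast h2
  have h4 := Real.log_le_log (by positivity) h3
  rw [Real.log_pow, Real.log_pow, Real.log_pow] at h4
  refine h4.trans ?_
  have hlog : 0 ≤ Real.log m := Real.log_natCast_nonneg m
  apply mul_le_mul_of_nonneg_right _ hlog
  push_cast
  have : (n : ℝ) ≤ (2:ℝ) ^ (i + 1) / m := by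
    have := @Nat.cast_div_le ℝ _ _ _ (2 ^ (i + 1)) m
    push_cast at this
    exact this
  linarith

lemma block (m i X : ℕ) (hm : 2 ≤ m) (hi : 1 ≤ i) :
    ∑ p ∈ (TT m X).filter (fun p => Nat.log 2 p = i), (1 / p : ℝ) ≤
      (12 / Real.log 2) * (Real.log m / m) * (1 / i) := by
  set T := (TT m X).filter (fun p => Nat.log 2 p = i) with hTdef
  have hlog2 : 0 < Real.log 2 := Real.log_pos (by norm_num)
  have hi' : (0:ℝ) < i := by exact_mod_cast hi
  have hm' : (0:ℝ) < m := by exact_mod_cast (by omega : 0 < m)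
  have hmem : ∀ p ∈ T, p.Prime ∧ Odd p ∧ Nat.log 2 p = i ∧ (m ∣ p - 1 ∨ m ∣ p + 1) := by
    intro p hp
    simp only [hTdef, TT, mem_filter] at hp
    tauto
  have hlt : ∀ p ∈ T, p + 1 ≤ 2 ^ (i + 1) := by
    intro p hp
    obtain ⟨h1, h2, h3, h4⟩ := hmem p hp
    rw [← h3]
    exact Nat.lt_pow_succ_log_self (by norm_num) p
  have hA := block_aux m (m + 1) i X hm hi (by omega) le_rfl (T.filter (fun p => m ∣ p - 1)) (by
    intro p hp
    rw [mem_filter] at hp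
    obtain ⟨h1, h2, h3, h4⟩ := hmem p hp.1
    refine ⟨h1, h2, h3, ?_⟩
    obtain ⟨k, hk⟩ := hp.2
    have h5 := h1.two_le
    have hk0 : 0 < k := by
      rcases Nat.eq_zero_or_pos k with h | h
      · subst h; omega
      · exact h
    obtain ⟨l, rfl⟩ : ∃ l, k = l + 1 := ⟨k - 1, by omega⟩
    refine ⟨l, ?_, ?_⟩
    · rw [Nat.lt_iff_add_one_le, Nat.le_div_iff_mul_le (by omega)]
      have := hlt p hp.1
      rw [mul_comm]
      omega
    · rw [mul_add] at hk; omega)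
  have hB := block_aux m (m - 1) i X hm hi (by omega) (by omega) (T.filter (fun p => m ∣ p + 1)) (by
    intro p hp
    rw [mem_filter] at hp
    obtain ⟨h1, h2, h3, h4⟩ := hmem p hp.1
    refine ⟨h1, h2, h3, ?_⟩
    obtain ⟨k, hk⟩ := hp.2
    have h5 := h1.two_le
    have hk0 : 0 < k := by
      rcases Nat.eq_zero_or_pos k with h | h
      · subst h; omega
      · exact h
    obtain ⟨l, rfl⟩ : ∃ l, k = l + 1 := ⟨k - 1, by omega⟩
    refine ⟨l, ?_, ?_⟩
    · rw [Nat.lt_iff_add_one_le, Nat.le_div_iff_mul_le (by omega)]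
      have := hlt p hp.1
      rw [mul_comm]
      omega
    · rw [mul_add] at hk; omega)
  have hcard : (T.card : ℝ) ≤ (T.filter (fun p => m ∣ p - 1)).card + (T.filter (fun p => m ∣ p + 1)).card := by
    have h1 : T ⊆ T.filter (fun p => m ∣ p - 1) ∪ T.filter (fun p => m ∣ p + 1) := by
      intro p hp
      obtain ⟨_, _, _, h4⟩ := hmem p hp
      rcases h4 with h | h
      · exact mem_union_left _ (mem_filter.2 ⟨hp, h⟩)
      · exact mem_union_right _ (mem_filter.2 ⟨hp, h⟩)
    exact_mod_cast (card_le_card h1).trans (card_union_le _ _)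
  have hT : (T.card : ℝ) * (i * Real.log 2) ≤ 6 * (2 ^ (i + 1) / m) * Real.log m := by
    nlinarith [mul_le_mul_of_nonneg_right hcard (by positivity : 0 ≤ i * Real.log 2)]
  have hsum : ∑ p ∈ T, (1 / p : ℝ) ≤ T.card * (1 / 2 ^ i) := by
    rw [← nsmul_eq_mul]
    apply Finset.sum_le_card_nsmul
    intro p hp
    obtain ⟨h1, h2, h3, h4⟩ := hmem p hp
    have : 2 ^ i ≤ p := by
      rw [← h3]
      exact Nat.pow_log_le_self 2 h1.ne_zero
    have h' : (2:ℝ) ^ i ≤ p := by exact_mod_cast this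
    exact one_div_le_one_div_of_le (by positivity) h'
  refine hsum.trans ?_
  rw [pow_succ] at hT
  have h7 : (T.card : ℝ) ≤ 6 * (2 ^ i * 2 / m) * Real.log m / (i * Real.log 2) := by
    rw [le_div_iff₀ (by positivity)]; exact hT
  calc (T.card : ℝ) * (1 / 2 ^ i) ≤ (6 * (2 ^ i * 2 / m) * Real.log m / (i * Real.log 2)) * (1 / 2 ^ i) := by gcongr
    _ = _ := by field_simp; ring

lemma S_le (m X : ℕ) (hm : 2 ≤ m) :
    ∑ p ∈ TT m X, (1 / p : ℝ) ≤
      (12 / Real.log 2) * (Real.log m / m) * (1 + Real.log (Nat.log 2 X)) := by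
  have hmap : ∀ p ∈ TT m X, Nat.log 2 p ∈ Icc 1 (Nat.log 2 X) := by
    intro p hp
    simp only [TT, mem_filter, mem_range] at hp
    rw [mem_Icc]
    refine ⟨?_, Nat.log_mono_right (by omega)⟩
    exact Nat.log_pos (by norm_num) hp.2.1.two_le
  rw [← Finset.sum_fiberwise_of_maps_to hmap]
  have hlog : 0 ≤ Real.log m := Real.log_natCast_nonneg m
  have hlog2 : 0 < Real.log 2 := Real.log_pos (by norm_num)
  calc _ ≤ ∑ i ∈ Icc 1 (Nat.log 2 X), (12 / Real.log 2) * (Real.log m / m) * (1 / (i:ℝ)) := by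
        apply Finset.sum_le_sum
        intro i hi
        exact block m i X hm (mem_Icc.1 hi).1
    _ = (12 / Real.log 2) * (Real.log m / m) * (harmonic (Nat.log 2 X) : ℝ) := by
        rw [← Finset.mul_sum, harmonic_eq_sum_Icc]
        push_cast
        simp
    _ ≤ _ := by
        apply mul_le_mul_of_nonneg_left (harmonic_le_one_add_log _)
        positivity

/-- reduction modulo `N` -/
abbrev redm (A : Matrix (Fin 2) (Fin 2) ℤ) (N : ℕ) : Matrix (Fin 2) (Fin 2) (ZMod N) :=
  (Int.castRingHom (ZMod N)).mapMatrix A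

lemma red_pow_iff (A : Matrix (Fin 2) (Fin 2) ℤ) (N k : ℕ) :
    (∀ i j, (N : ℤ) ∣ (A ^ k - 1) i j) ↔ redm A N ^ k = 1 := by
  rw [← map_pow, ← sub_eq_zero, ← map_one (Int.castRingHom (ZMod N)).mapMatrix, ← map_sub,
    ← Matrix.ext_iff]
  simp only [RingHom.mapMatrix_apply, Matrix.map_apply, Matrix.zero_apply, eq_intCast,
    ZMod.intCast_zmod_eq_zero_iff_dvd]

lemma exists_pow (A : Matrix (Fin 2) (Fin 2) ℤ) (hA : A.det = 1) (N : ℕ) (hN : 0 < N) :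
    ∃ k, 0 < k ∧ redm A N ^ k = 1 := by
  have : NeZero N := ⟨hN.ne'⟩
  have hdet : (redm A N).det = 1 := by
    rw [← RingHom.map_det, hA, map_one]
  let g : Matrix.SpecialLinearGroup (Fin 2) (ZMod N) := ⟨redm A N, hdet⟩
  have h := isOfFinOrder_of_finite g
  refine ⟨orderOf g, h.orderOf_pos, ?_⟩
  have h2 := pow_orderOf_eq_one g
  have h3 := congrArg Subtype.val h2
  rw [Matrix.SpecialLinearGroup.coe_pow] at h3
  exact h3

lemma matOrd_spec (A : Matrix (Fin 2) (Fin 2) ℤ) (hA : A.det = 1) (N : ℕ) (hN : 0 < N) :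
    0 < matOrd A N ∧ redm A N ^ matOrd A N = 1 := by
  obtain ⟨k, hk, hk'⟩ := exists_pow A hA N hN
  have h := Nat.sInf_mem (s := {k | 0 < k ∧ ∀ i j, (N : ℤ) ∣ (A ^ k - 1) i j})
    ⟨k, hk, (red_pow_iff A N k).2 hk'⟩
  exact ⟨h.1, (red_pow_iff A N _).1 h.2⟩

lemma matOrd_dvd (A : Matrix (Fin 2) (Fin 2) ℤ) (hA : A.det = 1) (N : ℕ) (hN : 0 < N) (k : ℕ)
    (hk : redm A N ^ k = 1) : matOrd A N ∣ k := by
  obtain ⟨h1, h2⟩ := matOrd_spec A hA N hN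
  have h3 : redm A N ^ (k % matOrd A N) = 1 := by
    rw [← Nat.div_add_mod k (matOrd A N), pow_add, pow_mul, h2, one_pow, one_mul] at hk
    exact hk
  rcases Nat.eq_zero_or_pos (k % matOrd A N) with h | h
  · exact Nat.dvd_of_mod_eq_zero h
  · have h4 : matOrd A N ≤ k % matOrd A N := Nat.sInf_le ⟨h, (red_pow_iff A N _).2 h3⟩
    exact absurd (Nat.mod_lt k h1) (not_lt.2 h4)

lemma matOrd_dvd_of_dvd (A : Matrix (Fin 2) (Fin 2) ℤ) (hA : A.det = 1) (N p : ℕ) (hN : 0 < N)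
    (hp : p ∣ N) : matOrd A p ∣ matOrd A N := by
  apply matOrd_dvd A hA p (Nat.pos_of_dvd_of_pos hp hN)
  rw [← red_pow_iff]
  intro i j
  exact (Int.natCast_dvd_natCast.2 hp).trans
    ((red_pow_iff A N _).2 (matOrd_spec A hA N hN).2 i j)

lemma matOrd_prime (A : Matrix (Fin 2) (Fin 2) ℤ) (hA : A.det = 1) (p : ℕ) (hp : p.Prime)
    (hD : ¬ p ∣ (4 * (A.trace ^ 2 - 4)).natAbs) :
    Odd p ∧ (matOrd A p ∣ p - 1 ∨ matOrd A p ∣ p + 1) := by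
  have hfact : Fact p.Prime := ⟨hp⟩
  have hodd : Odd p := by
    rcases hp.eq_two_or_odd' with h | h
    · exfalso; apply hD; rw [h, Int.natAbs_mul]
      exact Dvd.dvd.mul_right (by norm_num) _
    · exact h
  refine ⟨hodd, ?_⟩
  set M := redm A p with hM
  set t : ZMod p := M.trace with ht
  have hdet : M.det = 1 := by
    rw [hM, ← RingHom.map_det, hA, map_one]
  have htt : t = (A.trace : ZMod p) := by
    rw [ht, hM]; simp [Matrix.trace_fin_two]
  have hd : t ^ 2 - 4 ≠ 0 := by
    intro h
    apply hD
    rw [← Int.natCast_dvd]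
    apply Dvd.dvd.mul_left
    rw [← ZMod.intCast_zmod_eq_zero_iff_dvd]
    push_cast
    rw [← htt]; exact h
  have h2 : (2 : ZMod p) ≠ 0 := by
    intro h
    have : ((2:ℕ) : ZMod p) = 0 := by exact_mod_cast h
    rw [ZMod.natCast_eq_zero_iff] at this
    have h3 := (Nat.prime_dvd_prime_iff_eq hp Nat.prime_two).1 this
    rw [h3] at hodd
    exact absurd hodd (by decide)
  have hCH : M * M = t • M - 1 := by
    rw [Matrix.det_fin_two] at hdet
    rw [ht, Matrix.trace_fin_two]
    ext i j
    fin_cases i <;> fin_cases j <;> simp [Matrix.mul_apply, Fin.sum_univ_two] <;>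
      first | linear_combination (-1 : ZMod p) * hdet | ring
  set B := (2 : ZMod p) • M - t • (1 : Matrix (Fin 2) (Fin 2) (ZMod p)) with hB
  have hB2 : B ^ 2 = (t ^ 2 - 4) • (1 : Matrix (Fin 2) (Fin 2) (ZMod p)) := by
    rw [pow_two, hB, sub_mul, mul_sub, mul_sub]
    simp only [smul_mul_assoc, mul_smul_comm, hCH, one_mul, mul_one]
    module
  have hBp : B ^ p = (t ^ 2 - 4) ^ (p / 2) • B := by
    obtain ⟨r, hr⟩ := hodd
    have : p / 2 = r := by omega
    rw [this]
    have h9 : B ^ p = B ^ (2 * r + 1) := congrArg (fun e => B ^ e) hr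
    rw [h9, pow_succ, pow_mul, hB2, smul_pow, one_pow, smul_mul_assoc, one_mul]
  have hchar : CharP (Matrix (Fin 2) (Fin 2) (ZMod p)) p := Matrix.charP p
  have hMB : (2 : ZMod p) • M = t • (1 : Matrix (Fin 2) (Fin 2) (ZMod p)) + B := by
    rw [hB]; abel
  have hpow : (2 : ZMod p) • M ^ p = t • (1 : Matrix (Fin 2) (Fin 2) (ZMod p)) +
      (t ^ 2 - 4) ^ (p / 2) • B := by
    have h := congrArg (fun Y => Y ^ p) hMB
    beta_reduce at h
    rw [add_pow_char_of_commute p ((Commute.one_left B).smul_left t), hBp, smul_pow, smul_pow,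
      ZMod.pow_card, ZMod.pow_card, one_pow] at h
    exact h
  have hcancel : ∀ Y Z : Matrix (Fin 2) (Fin 2) (ZMod p), (2 : ZMod p) • Y = (2 : ZMod p) • Z →
      Y = Z := fun Y Z h => smul_right_injective _ h2 h
  have hinv : (t • (1 : Matrix (Fin 2) (Fin 2) (ZMod p)) - M) * M = 1 := by
    rw [sub_mul, hCH, smul_mul_assoc, one_mul]; abel
  rcases ZMod.pow_div_two_eq_neg_one_or_one p hd with h | h
  · left
    apply matOrd_dvd A hA p hp.pos
    have h3 : M ^ p = M := by
      apply hcancel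
      rw [hpow, h, one_smul, ← hMB]
    have h4 : M ^ (p - 1) * M = M := by
      rw [← pow_succ, Nat.sub_add_cancel hp.one_lt.le, h3]
    have h5 : M * (t • (1 : Matrix (Fin 2) (Fin 2) (ZMod p)) - M) = 1 := mul_eq_one_comm.1 hinv
    calc M ^ (p - 1) = M ^ (p - 1) * M * (t • (1 : Matrix (Fin 2) (Fin 2) (ZMod p)) - M) := by
          rw [mul_assoc, h5, mul_one]
      _ = 1 := by rw [h4, h5]
  · right
    apply matOrd_dvd A hA p hp.pos
    have h3 : M ^ p = t • (1 : Matrix (Fin 2) (Fin 2) (ZMod p)) - M := by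
      apply hcancel
      rw [hpow, h, hB]
      module
    rw [pow_succ, ← hM, h3, hinv]

lemma sqf_squarefree (N : ℕ) : Squarefree (sqfPart N) := by
  unfold sqfPart
  apply Finset.squarefree_prod_of_pairwise_isCoprime
  · intro p hp q hq hpq
    rw [Function.onFun, ← Nat.coprime_iff_isRelPrime]
    apply Nat.Coprime.pow
    exact (Nat.coprime_primes (Nat.prime_of_mem_primeFactors hp)
      (Nat.prime_of_mem_primeFactors hq)).2 hpq
  · intro p hp
    have hp' := Nat.prime_of_mem_primeFactors hp
    rcases Nat.mod_two_eq_zero_or_one (N.factorization p) with h | h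
    · rw [h]; simp
    · rw [h, pow_one]; exact hp'.squarefree

lemma dZero_prop (A : Matrix (Fin 2) (Fin 2) ℤ) (N p : ℕ)
    (hp : p ∈ (dZero A N).primeFactors) :
    p.Prime ∧ p ∣ N ∧ ¬ p ∣ (4 * (A.trace ^ 2 - 4)).natAbs := by
  have hpp := Nat.prime_of_mem_primeFactors hp
  have hpd := Nat.dvd_of_mem_primeFactors hp
  set D := (4 * (A.trace ^ 2 - 4)).natAbs with hD
  have hmul : dZero A N * Nat.gcd (sqfPart N) D = sqfPart N :=
    Nat.div_mul_cancel (Nat.gcd_dvd_left _ _)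
  have hps : p ∣ sqfPart N := by
    rw [← hmul]; exact Dvd.dvd.mul_right hpd _
  refine ⟨hpp, ?_, ?_⟩
  · unfold sqfPart at hps
    obtain ⟨q, hq, hpq⟩ := (Prime.dvd_finsetProd_iff hpp.prime _).1 hps
    have h := hpp.dvd_of_dvd_pow hpq
    rw [(Nat.prime_dvd_prime_iff_eq hpp (Nat.prime_of_mem_primeFactors hq)).1 h]
    exact Nat.dvd_of_mem_primeFactors hq
  · intro h
    have h1 : p ∣ Nat.gcd (sqfPart N) D := Nat.dvd_gcd hps h
    have h2 : p * p ∣ sqfPart N := by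
      rw [← hmul]; exact mul_dvd_mul hpd h1
    have := sqf_squarefree N p h2
    exact hpp.one_lt.ne' (Nat.isUnit_iff.1 this)

/-- the smooth part -/
noncomputable def smP (Z n : ℕ) : ℕ :=
  ∏ q ∈ n.primeFactors.filter (fun q => q ≤ Z), q ^ n.factorization q

/-- the rough part -/
noncomputable def rgP (Z n : ℕ) : ℕ :=
  ∏ q ∈ n.primeFactors.filter (fun q => ¬ q ≤ Z), q ^ n.factorization q

lemma smP_mul_rgP (Z n : ℕ) (hn : 0 < n) : smP Z n * rgP Z n = n := by
  unfold smP rgP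
  rw [prod_filter_mul_prod_filter_not]
  exact Nat.prod_factorization_pow_eq_self hn.ne'

lemma smP_pos (Z n : ℕ) : 0 < smP Z n :=
  Finset.prod_pos (fun q hq =>
    pow_pos (Nat.prime_of_mem_primeFactors (mem_filter.1 hq).1).pos _)

lemma prime_dvd_rgP (Z n q : ℕ) (hq : q.Prime) (h : q ∣ rgP Z n) : Z < q ∧ q ∣ n := by
  unfold rgP at h
  obtain ⟨r, hr, hqr⟩ := (Prime.dvd_finsetProd_iff hq.prime _).1 h
  have h1 := hq.dvd_of_dvd_pow hqr
  rw [mem_filter] at hr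
  have h2 := (Nat.prime_dvd_prime_iff_eq hq (Nat.prime_of_mem_primeFactors hr.1)).1 h1
  rw [h2]
  exact ⟨not_le.1 hr.2, Nat.dvd_of_mem_primeFactors hr.1⟩

lemma prod_le_of_not_bad (o : ℕ → ℕ) (P : Finset ℕ) (k Z : ℕ) (hk : 0 < k)
    (ho : ∀ p ∈ P, 0 < o p) (hok : ∀ p ∈ P, o p ∣ k)
    (hnb : ¬ ∃ q, q.Prime ∧ Z < q ∧ ∃ p₁ ∈ P, ∃ p₂ ∈ P, p₁ ≠ p₂ ∧ q ∣ o p₁ ∧ q ∣ o p₂) :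
    ∏ p ∈ P, o p ≤ k * ∏ p ∈ P, smP Z (o p) := by
  have h1 : ∏ p ∈ P, o p = (∏ p ∈ P, smP Z (o p)) * ∏ p ∈ P, rgP Z (o p) := by
    rw [← prod_mul_distrib]
    exact prod_congr rfl (fun p hp => (smP_mul_rgP Z _ (ho p hp)).symm)
  have h2 : ∏ p ∈ P, rgP Z (o p) ∣ k := by
    apply Finset.prod_dvd_of_isRelPrime
    · intro p₁ h₁ p₂ h₂ hne
      rw [Function.onFun, ← Nat.coprime_iff_isRelPrime]
      apply Nat.coprime_of_dvd
      intro q hq hd1 hd2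
      obtain ⟨a1, a2⟩ := prime_dvd_rgP Z _ q hq hd1
      obtain ⟨b1, b2⟩ := prime_dvd_rgP Z _ q hq hd2
      exact hnb ⟨q, hq, a1, p₁, h₁, p₂, h₂, hne, a2, b2⟩
    · intro p hp
      refine Dvd.dvd.trans ?_ (hok p hp)
      exact ⟨smP Z (o p), by rw [mul_comm, smP_mul_rgP Z _ (ho p hp)]⟩
  rw [h1, mul_comm]
  exact Nat.mul_le_mul_right _ (Nat.le_of_dvd hk h2)

/-- the hypotheses on the local orders -/
def GoodSys (o : ℕ → ℕ) (P : ℕ → Finset ℕ) : Prop :=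
  ∀ N, 1 ≤ N → ∀ p ∈ P N, p.Prime ∧ p ∣ N ∧ Odd p ∧ 0 < o p ∧ (o p ∣ p - 1 ∨ o p ∣ p + 1)

lemma mem_TT_of (o : ℕ → ℕ) (P : ℕ → Finset ℕ) (h : GoodSys o P) (N X p m : ℕ) (hN : 1 ≤ N)
    (hNX : N ≤ X) (hp : p ∈ P N) (hm : m ∣ o p) : p ∈ TT m X := by
  obtain ⟨h1, h2, h3, h4, h5⟩ := h N hN p hp
  have := Nat.le_of_dvd hN h2
  simp only [TT, mem_filter, mem_range]
  refine ⟨by omega, h1, h3, ?_⟩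
  rcases h5 with h5 | h5
  · exact Or.inl (hm.trans h5)
  · exact Or.inr (hm.trans h5)

lemma o_le (o : ℕ → ℕ) (P : ℕ → Finset ℕ) (h : GoodSys o P) (N X p : ℕ) (hN : 1 ≤ N)
    (hNX : N ≤ X) (hp : p ∈ P N) : o p ≤ X + 1 := by
  obtain ⟨h1, h2, h3, h4, h5⟩ := h N hN p hp
  have := Nat.le_of_dvd hN h2
  have h6 := h1.two_le
  rcases h5 with h5 | h5
  · have := Nat.le_of_dvd (by omega) h5; omega
  · have := Nat.le_of_dvd (by omega) h5; omega

open Classical in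
lemma bad1 (o : ℕ → ℕ) (P : ℕ → Finset ℕ) (h : GoodSys o P) (X Z : ℕ) :
    (((Ioc 0 X).filter (fun N => ∃ q, q.Prime ∧ Z < q ∧ ∃ p₁ ∈ P N, ∃ p₂ ∈ P N,
      p₁ ≠ p₂ ∧ q ∣ o p₁ ∧ q ∣ o p₂)).card : ℝ) ≤
    X * ∑ q ∈ (range (X + 2)).filter (fun q => q.Prime ∧ Z < q), (∑ p ∈ TT q X, (1 / p : ℝ)) ^ 2 := by
  set Q := (range (X + 2)).filter (fun q => q.Prime ∧ Z < q) with hQ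
  have hsub : ((Ioc 0 X).filter (fun N => ∃ q, q.Prime ∧ Z < q ∧ ∃ p₁ ∈ P N, ∃ p₂ ∈ P N,
      p₁ ≠ p₂ ∧ q ∣ o p₁ ∧ q ∣ o p₂)) ⊆
      Q.biUnion (fun q => (TT q X ×ˢ TT q X).biUnion
        (fun w => (Ioc 0 X).filter (fun N => w.1 * w.2 ∣ N))) := by
    intro N hN
    rw [mem_filter, mem_Ioc] at hN
    obtain ⟨⟨hN0, hNX⟩, q, hq, hZq, p₁, h₁, p₂, h₂, hne, hd1, hd2⟩ := hN
    rw [mem_biUnion]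
    refine ⟨q, ?_, ?_⟩
    · rw [hQ, mem_filter, mem_range]
      have a := o_le o P h N X p₁ hN0 hNX h₁
      have b := Nat.le_of_dvd (h N hN0 p₁ h₁).2.2.2.1 hd1
      exact ⟨by omega, hq, hZq⟩
    · rw [mem_biUnion]
      refine ⟨(p₁, p₂), ?_, ?_⟩
      · rw [mem_product]
        exact ⟨mem_TT_of o P h N X p₁ q hN0 hNX h₁ hd1, mem_TT_of o P h N X p₂ q hN0 hNX h₂ hd2⟩
      · rw [mem_filter, mem_Ioc]
        refine ⟨⟨hN0, hNX⟩, ?_⟩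
        apply Nat.Coprime.mul_dvd_of_dvd_of_dvd
        · exact (Nat.coprime_primes (h N hN0 p₁ h₁).1 (h N hN0 p₂ h₂).1).2 hne
        · exact (h N hN0 p₁ h₁).2.1
        · exact (h N hN0 p₂ h₂).2.1
  have hc := (card_le_card hsub).trans (card_biUnion_le)
  have hc2 : ∑ q ∈ Q, ((TT q X ×ˢ TT q X).biUnion
        (fun w => (Ioc 0 X).filter (fun N => w.1 * w.2 ∣ N))).card ≤
      ∑ q ∈ Q, ∑ w ∈ TT q X ×ˢ TT q X, X / (w.1 * w.2) := by
    apply Finset.sum_le_sum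
    intro q _
    refine card_biUnion_le.trans ?_
    apply Finset.sum_le_sum
    intro w _
    rw [Nat.Ioc_filter_dvd_card_eq_div]
  have hc3 : (((Ioc 0 X).filter (fun N => ∃ q, q.Prime ∧ Z < q ∧ ∃ p₁ ∈ P N, ∃ p₂ ∈ P N,
      p₁ ≠ p₂ ∧ q ∣ o p₁ ∧ q ∣ o p₂)).card : ℝ) ≤
      ((∑ q ∈ Q, ∑ w ∈ TT q X ×ˢ TT q X, X / (w.1 * w.2) : ℕ) : ℝ) :=
    Nat.cast_le.2 (hc.trans hc2)
  refine hc3.trans ?_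
  rw [Nat.cast_sum, mul_sum]
  apply Finset.sum_le_sum
  intro q _
  rw [Nat.cast_sum, pow_two, sum_mul_sum, ← sum_product', mul_sum]
  apply Finset.sum_le_sum
  intro w _
  refine Nat.cast_div_le.trans ?_
  push_cast
  rw [div_mul_div_comm, one_mul, mul_one_div]

lemma log_smP (Z n X : ℕ) (hn : n ≤ X + 1) :
    Real.log (smP Z n) ≤ ∑ q ∈ (Icc 1 Z).filter Nat.Prime, ∑ j ∈ Ico 1 (X + 2),
      if q ^ j ∣ n then Real.log q else 0 := by
  rcases Nat.eq_zero_or_pos n with h0 | h0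
  · subst h0
    simp only [smP, Nat.primeFactors_zero, filter_empty, prod_empty, Nat.cast_one, Real.log_one]
    apply Finset.sum_nonneg; intro q _
    apply Finset.sum_nonneg; intro j _
    split_ifs
    · exact Real.log_natCast_nonneg q
    · exact le_rfl
  unfold smP
  push_cast
  rw [Real.log_prod]
  · have hsub : n.primeFactors.filter (fun q => q ≤ Z) ⊆ (Icc 1 Z).filter Nat.Prime := by
      intro q hq
      rw [mem_filter] at hq
      have hp := Nat.prime_of_mem_primeFactors hq.1
      rw [mem_filter, mem_Icc]
      exact ⟨⟨hp.one_lt.le, hq.2⟩, hp⟩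
    calc _ ≤ ∑ q ∈ (Icc 1 Z).filter Nat.Prime, Real.log ((q:ℝ) ^ n.factorization q) := by
          apply Finset.sum_le_sum_of_subset_of_nonneg hsub
          intro q _ _
          rw [Real.log_pow]
          exact mul_nonneg (Nat.cast_nonneg _) (Real.log_natCast_nonneg q)
      _ ≤ _ := by
          apply Finset.sum_le_sum
          intro q hq
          rw [mem_filter] at hq
          rw [Real.log_pow, Nat.factorization_eq_card_pow_dvd n hq.2, ← Finset.sum_filter,
            Finset.sum_const, nsmul_eq_mul]
          apply mul_le_mul_of_nonneg_right _ (Real.log_natCast_nonneg q)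
          norm_cast
          apply card_le_card
          apply Finset.filter_subset_filter
          apply Finset.Ico_subset_Ico le_rfl (by omega)
  · intro q hq
    rw [mem_filter] at hq
    have hp := Nat.prime_of_mem_primeFactors hq.1
    have : (q:ℝ) ≠ 0 := by exact_mod_cast hp.ne_zero
    positivity

lemma bad2 (o : ℕ → ℕ) (P : ℕ → Finset ℕ) (h : GoodSys o P) (X Z : ℕ) :
    ∑ N ∈ Ioc 0 X, ∑ p ∈ P N, Real.log (smP Z (o p)) ≤
      X * ∑ q ∈ (Icc 1 Z).filter Nat.Prime, Real.log q * ∑ j ∈ Ico 1 (X + 2),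
        ∑ p ∈ TT (q ^ j) X, (1 / p : ℝ) := by
  calc _ ≤ ∑ N ∈ Ioc 0 X, ∑ q ∈ (Icc 1 Z).filter Nat.Prime, ∑ j ∈ Ico 1 (X + 2),
        ∑ p ∈ TT (q ^ j) X, if p ∣ N then Real.log q else 0 := by
        apply Finset.sum_le_sum
        intro N hN
        rw [mem_Ioc] at hN
        calc _ ≤ ∑ p ∈ P N, ∑ q ∈ (Icc 1 Z).filter Nat.Prime, ∑ j ∈ Ico 1 (X + 2),
              (if q ^ j ∣ o p then Real.log q else 0) :=
              Finset.sum_le_sum (fun p hp => log_smP Z _ X (o_le o P h N X p hN.1 hN.2 hp))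
          _ = ∑ q ∈ (Icc 1 Z).filter Nat.Prime, ∑ j ∈ Ico 1 (X + 2), ∑ p ∈ P N,
              (if q ^ j ∣ o p then Real.log q else 0) := by
              rw [Finset.sum_comm]
              apply Finset.sum_congr rfl
              intro q _
              rw [Finset.sum_comm]
          _ ≤ _ := by
              apply Finset.sum_le_sum
              intro q _
              apply Finset.sum_le_sum
              intro j _
              rw [← Finset.sum_filter, ← Finset.sum_filter]
              apply Finset.sum_le_sum_of_subset_of_nonneg
              · intro p hp
                rw [mem_filter] at hp ⊢
                exact ⟨mem_TT_of o P h N X p _ hN.1 hN.2 hp.1 hp.2, (h N hN.1 p hp.1).2.1⟩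
              · intro _ _ _
                exact Real.log_natCast_nonneg q
    _ = ∑ q ∈ (Icc 1 Z).filter Nat.Prime, ∑ j ∈ Ico 1 (X + 2),
        ∑ p ∈ TT (q ^ j) X, ∑ N ∈ Ioc 0 X, (if p ∣ N then Real.log q else 0) := by
        rw [Finset.sum_comm]
        apply Finset.sum_congr rfl
        intro q _
        rw [Finset.sum_comm]
        apply Finset.sum_congr rfl
        intro j _
        rw [Finset.sum_comm]
    _ ≤ _ := by
        rw [mul_sum]
        apply Finset.sum_le_sum
        intro q _
        rw [← mul_assoc, mul_sum]
        apply Finset.sum_le_sum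
        intro j _
        rw [mul_sum]
        apply Finset.sum_le_sum
        intro p _
        rw [← Finset.sum_filter, Finset.sum_const, nsmul_eq_mul, Nat.Ioc_filter_dvd_card_eq_div]
        have h1 : ((X / p : ℕ) : ℝ) ≤ (X:ℝ) / p := Nat.cast_div_le
        calc ((X / p : ℕ) : ℝ) * Real.log q ≤ (X:ℝ) / p * Real.log q :=
              mul_le_mul_of_nonneg_right h1 (Real.log_natCast_nonneg q)
          _ = _ := by ring

lemma small_sum_bd (q J : ℕ) (hq : 2 ≤ q) :
    Real.log q * ∑ j ∈ Ico 1 J, Real.log ((q ^ j : ℕ) : ℝ) / ((q ^ j : ℕ) : ℝ) ≤ 16 := by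
  have key : ∀ y : ℝ, 0 ≤ y → Real.log y ≤ 2 * √y := by
    intro y hy
    have := Real.log_le_rpow_div hy (ε := 1 / 2) (by norm_num)
    rw [← Real.sqrt_eq_rpow] at this
    linarith
  have hq' : (2:ℝ) ≤ q := by exact_mod_cast hq
  have hs : (4 / 3 : ℝ) ≤ √q := by
    apply Real.le_sqrt_of_sq_le; norm_num; linarith
  set r := 1 / √(q:ℝ) with hr
  have hr0 : 0 < r := by positivity
  have hr1 : r ≤ 3 / 4 := by
    rw [hr, div_le_iff₀ (by positivity)]; linarith
  have h1 : ∑ j ∈ Ico 1 J, Real.log ((q ^ j : ℕ) : ℝ) / ((q ^ j : ℕ) : ℝ) ≤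
      ∑ j ∈ Ico 1 J, 2 * r ^ j := by
    apply Finset.sum_le_sum
    intro j _
    have hpos : (0:ℝ) < ((q ^ j : ℕ) : ℝ) := by exact_mod_cast pow_pos (by omega) j
    rw [div_le_iff₀ hpos]
    refine (key _ hpos.le).trans ?_
    push_cast
    have h2 : √((q:ℝ) ^ j) = √(q:ℝ) ^ j := by
      rw [Real.sqrt_eq_iff_eq_sq (by positivity) (by positivity), ← pow_mul, mul_comm, pow_mul,
        Real.sq_sqrt (by positivity)]
    have h3 : (q:ℝ) ^ j = √(q:ℝ) ^ j * √(q:ℝ) ^ j := by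
      rw [← mul_pow, Real.mul_self_sqrt (by positivity)]
    rw [h2, h3, hr, div_pow, one_pow]
    apply le_of_eq
    have : √(q:ℝ) ^ j ≠ 0 := by positivity
    field_simp
  have h2 : ∑ j ∈ Ico 1 J, 2 * r ^ j ≤ 8 * r := by
    rw [← mul_sum]
    have h3 := geom_sum_Ico_le_of_lt_one (m := 1) (n := J) hr0.le (by linarith : r < 1)
    have h4 : r ^ 1 / (1 - r) ≤ 4 * r := by
      rw [div_le_iff₀ (by linarith)]; nlinarith
    linarith
  calc _ ≤ (2 * √(q:ℝ)) * (8 * r) := by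
        apply mul_le_mul (key _ (by positivity)) (h1.trans h2) _ (by positivity)
        apply Finset.sum_nonneg; intro j _
        exact div_nonneg (Real.log_natCast_nonneg _) (Nat.cast_nonneg _)
    _ = 16 := by
        rw [hr]; field_simp; norm_num

lemma summ : Summable (fun n : ℕ => Real.log n ^ 2 / (n:ℝ) ^ (6 / 5 : ℝ)) := by
  have h : Summable (fun n : ℕ => 400 * (1 / (n:ℝ) ^ (11 / 10 : ℝ))) :=
    (Real.summable_one_div_nat_rpow.2 (by norm_num)).mul_left 400
  refine Summable.of_nonneg_of_le (fun n => by positivity) (fun n => ?_) h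
  rcases Nat.eq_zero_or_pos n with h0 | h0
  · subst h0; simp
  have hn : (0:ℝ) < n := by exact_mod_cast h0
  have h1 := Real.log_le_rpow_div hn.le (ε := 1 / 20) (by norm_num)
  have h2 : Real.log n ^ 2 ≤ 400 * (n:ℝ) ^ (1 / 10 : ℝ) := by
    have h3 := pow_le_pow_left₀ (Real.log_natCast_nonneg n) h1 2
    refine h3.trans (le_of_eq ?_)
    rw [div_pow, ← Real.rpow_natCast, ← Real.rpow_mul hn.le]
    norm_num
    ring
  rw [div_le_iff₀ (by positivity)]
  refine h2.trans (le_of_eq ?_)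
  have h3 : (n:ℝ) ^ (6 / 5 : ℝ) = (n:ℝ) ^ (11 / 10 : ℝ) * (n:ℝ) ^ (1 / 10 : ℝ) := by
    rw [← Real.rpow_add hn]; norm_num
  have h4 : (n:ℝ) ^ (11 / 10 : ℝ) ≠ 0 := by positivity
  rw [h3]
  field_simp

lemma tail_sum (w : ℝ) (hw : 0 < w) (Q : Finset ℕ) (hQ : ∀ q ∈ Q, w ≤ (q:ℝ)) :
    ∑ q ∈ Q, (Real.log q / q) ^ 2 ≤
      w ^ (-(4 / 5) : ℝ) * ∑' n : ℕ, Real.log n ^ 2 / (n:ℝ) ^ (6 / 5 : ℝ) := by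
  calc _ ≤ ∑ q ∈ Q, w ^ (-(4 / 5) : ℝ) * (Real.log q ^ 2 / (q:ℝ) ^ (6 / 5 : ℝ)) := by
        apply Finset.sum_le_sum
        intro q hq
        have hqw := hQ q hq
        have hq0 : (0:ℝ) < q := lt_of_lt_of_le hw hqw
        have h1 : (q:ℝ) ^ (-(4 / 5) : ℝ) ≤ w ^ (-(4 / 5) : ℝ) :=
          Real.rpow_le_rpow_of_nonpos hw hqw (by norm_num)
        have h2 : (Real.log q / q) ^ 2 =
            (q:ℝ) ^ (-(4 / 5) : ℝ) * (Real.log q ^ 2 / (q:ℝ) ^ (6 / 5 : ℝ)) := by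
          have h3 : (q:ℝ) ^ (6 / 5 : ℝ) = (q:ℝ) ^ 2 * (q:ℝ) ^ (-(4 / 5) : ℝ) := by
            rw [← Real.rpow_natCast, ← Real.rpow_add hq0]; norm_num
          have h4 : (q:ℝ) ^ (-(4 / 5) : ℝ) ≠ 0 := by positivity
          rw [h3, div_pow, mul_div_assoc', mul_comm ((q:ℝ) ^ 2), mul_div_mul_left _ _ h4]
        rw [h2]
        apply mul_le_mul_of_nonneg_right h1
        positivity
    _ ≤ _ := by
        rw [← mul_sum]
        apply mul_le_mul_of_nonneg_left _ (by positivity)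
        exact summ.sum_le_tsum _ (fun n _ => by positivity)

lemma S_le' (x : ℝ) (hx : 1 ≤ Real.log (Real.log x)) (hx' : 1 ≤ x) (hx2 : 1 ≤ Real.log x)
    (m : ℕ) (hm : 2 ≤ m) :
    ∑ p ∈ TT m ⌊x⌋₊, (1 / p : ℝ) ≤ 72 * Real.log (Real.log x) * (Real.log m / m) := by
  refine (S_le m ⌊x⌋₊ hm).trans ?_
  have hl2 : (1 / 2 : ℝ) < Real.log 2 := by linarith [Real.log_two_gt_d9]
  have h1 : (12 / Real.log 2) ≤ 24 := by
    rw [div_le_iff₀ (by linarith)]; linarith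
  have hH : 1 + Real.log (Nat.log 2 ⌊x⌋₊) ≤ 3 * Real.log (Real.log x) := by
    rcases Nat.eq_zero_or_pos (Nat.log 2 ⌊x⌋₊) with h0 | h0
    · rw [h0]; simp; linarith
    have h2 := Real.natLog_le_logb ⌊x⌋₊ 2
    have hfl : (0:ℝ) < ⌊x⌋₊ := by exact_mod_cast Nat.floor_pos.2 hx'
    have h3 : (Nat.log 2 ⌊x⌋₊ : ℝ) ≤ 2 * Real.log x := by
      refine h2.trans ?_
      rw [Real.logb, div_le_iff₀ (by push_cast; linarith)]
      have h4 : Real.log ⌊x⌋₊ ≤ Real.log x :=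
        Real.log_le_log hfl (Nat.floor_le (by linarith))
      push_cast
      nlinarith
    have h5 := Real.log_le_log (by exact_mod_cast h0) h3
    rw [Real.log_mul (by norm_num) (by linarith)] at h5
    have : Real.log 2 < 1 := by linarith [Real.log_two_lt_d9]
    linarith
  have hlm : 0 ≤ Real.log m / m := div_nonneg (Real.log_natCast_nonneg m) (Nat.cast_nonneg m)
  calc _ ≤ 24 * (Real.log m / m) * (3 * Real.log (Real.log x)) := by
        apply mul_le_mul (mul_le_mul_of_nonneg_right h1 hlm) hH _ (by positivity)
        have := Real.log_natCast_nonneg (Nat.log 2 ⌊x⌋₊)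
        linarith
    _ = _ := by ring

open Classical in
lemma main_count (o : ℕ → ℕ) (P : ℕ → Finset ℕ) (h : GoodSys o P) (k : ℕ → ℕ)
    (hk : ∀ N, 1 ≤ N → 0 < k N) (hok : ∀ N, 1 ≤ N → ∀ p ∈ P N, o p ∣ k N) :
    ∀ ε : ℝ, 0 < ε → ∃ x₀ : ℝ, ∀ x : ℝ, x₀ ≤ x →
      ({N : ℕ | 1 ≤ N ∧ (N : ℝ) ≤ x ∧
          (k N : ℝ) < (∏ p ∈ P N, (o p : ℝ)) /
              Real.exp (3 * Real.log (Real.log x) ^ 4)}.ncard : ℝ) ≤ ε * x := by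
  intro ε hε
  set K := ∑' n : ℕ, Real.log n ^ 2 / (n:ℝ) ^ (6 / 5 : ℝ) with hK
  have hK0 : 0 ≤ K := tsum_nonneg (fun n => by positivity)
  have t0 : Filter.Tendsto (fun x : ℝ => Real.log (Real.log x)) Filter.atTop Filter.atTop :=
    Real.tendsto_log_atTop.comp Real.tendsto_log_atTop
  have t1 : Filter.Tendsto (fun x : ℝ => 72 ^ 2 * K * Real.log (Real.log x) ^ (-(6 / 25) : ℝ))
      Filter.atTop (nhds 0) := by
    have := ((tendsto_rpow_neg_atTop (y := 6 / 25) (by norm_num)).comp t0).const_mul (72 ^ 2 * K)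
    simpa using this
  have t2 : Filter.Tendsto (fun x : ℝ => 384 * Real.log (Real.log x) ^ (-(1 / 5) : ℝ))
      Filter.atTop (nhds 0) := by
    have := ((tendsto_rpow_neg_atTop (y := 1 / 5) (by norm_num)).comp t0).const_mul 384
    simpa using this
  have ev := (t0.eventually_ge_atTop 1).and ((Filter.eventually_ge_atTop (1:ℝ)).and
    ((Real.tendsto_log_atTop.eventually_ge_atTop 1).and
    ((t1.eventually_le_const (half_pos hε)).and (t2.eventually_le_const (half_pos hε)))))
  obtain ⟨x₀, hx₀⟩ := Filter.eventually_atTop.1 ev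
  refine ⟨x₀, fun x hx => ?_⟩
  obtain ⟨hL, hx1, hlx, e1, e2⟩ := hx₀ x hx
  set X := ⌊x⌋₊ with hX
  have hS := S_le' x hL hx1 hlx
  rw [← hX] at hS
  set L := Real.log (Real.log x) with hLdef
  have hL0 : 0 < L := by linarith
  have hXx : (X:ℝ) ≤ x := Nat.floor_le (by linarith)
  set Z := ⌊L ^ (14 / 5 : ℝ)⌋₊ with hZ
  have hZle : (Z:ℝ) ≤ L ^ (14 / 5 : ℝ) := Nat.floor_le (by positivity)
  -- first bad set
  set B1 := (Ioc 0 X).filter (fun N => ∃ q, q.Prime ∧ Z < q ∧ ∃ p₁ ∈ P N, ∃ p₂ ∈ P N,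
      p₁ ≠ p₂ ∧ q ∣ o p₁ ∧ q ∣ o p₂) with hB1
  set B2 := (Ioc 0 X).filter (fun N => 3 * L ^ 4 ≤ ∑ p ∈ P N, Real.log (smP Z (o p))) with hB2
  have c1 : (B1.card : ℝ) ≤ ε / 2 * x := by
    refine (bad1 o P h X Z).trans ?_
    have s1 : ∑ q ∈ (range (X + 2)).filter (fun q => q.Prime ∧ Z < q),
        (∑ p ∈ TT q X, (1 / p : ℝ)) ^ 2 ≤
        ∑ q ∈ (range (X + 2)).filter (fun q => q.Prime ∧ Z < q),
          (72 * L) ^ 2 * (Real.log q / q) ^ 2 := by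
      apply Finset.sum_le_sum
      intro q hq
      rw [mem_filter] at hq
      rw [← mul_pow]
      exact pow_le_pow_left₀ (Finset.sum_nonneg (fun p _ => by positivity))
        (hS q hq.2.1.two_le) 2
    rw [← mul_sum] at s1
    have s2 := tail_sum (L ^ (14 / 5 : ℝ)) (by positivity)
      ((range (X + 2)).filter (fun q => q.Prime ∧ Z < q)) (by
        intro q hq
        rw [mem_filter] at hq
        exact (Nat.lt_of_floor_lt hq.2.2).le)
    rw [← hK] at s2
    have s3 : (72 * L) ^ 2 * ((L ^ (14 / 5 : ℝ)) ^ (-(4 / 5) : ℝ) * K) =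
        72 ^ 2 * K * L ^ (-(6 / 25) : ℝ) := by
      rw [← Real.rpow_mul hL0.le, mul_pow, ← Real.rpow_natCast L 2]
      have : L ^ (-(6 / 25) : ℝ) = L ^ ((2:ℕ):ℝ) * L ^ ((14 / 5 : ℝ) * -(4 / 5)) := by
        rw [← Real.rpow_add hL0]; norm_num
      rw [this]; ring
    have s4 := s1.trans (mul_le_mul_of_nonneg_left s2 (by positivity : 0 ≤ (72 * L) ^ 2))
    rw [s3] at s4
    have s5 := s4.trans e1
    calc _ ≤ (X:ℝ) * (ε / 2) := mul_le_mul_of_nonneg_left s5 (Nat.cast_nonneg _)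
      _ ≤ x * (ε / 2) := mul_le_mul_of_nonneg_right hXx (by positivity)
      _ = _ := by ring
  have hlogsm : ∀ _N p : ℕ, 0 ≤ Real.log (smP Z (o p)) := fun N p => Real.log_natCast_nonneg _
  have c2 : (B2.card : ℝ) ≤ ε / 2 * x := by
    have m1 : (B2.card : ℝ) * (3 * L ^ 4) ≤
        ∑ N ∈ Ioc 0 X, ∑ p ∈ P N, Real.log (smP Z (o p)) := by
      rw [← nsmul_eq_mul]
      refine (Finset.card_nsmul_le_sum B2 (fun N => ∑ p ∈ P N, Real.log (smP Z (o p))) _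
        (fun N hN => (mem_filter.1 hN).2)).trans ?_
      apply Finset.sum_le_sum_of_subset_of_nonneg (filter_subset _ _)
      intro N _ _
      exact Finset.sum_nonneg (fun p _ => hlogsm N p)
    have m2 : ∑ q ∈ (Icc 1 Z).filter Nat.Prime, Real.log q * ∑ j ∈ Ico 1 (X + 2),
        ∑ p ∈ TT (q ^ j) X, (1 / p : ℝ) ≤ Z * (72 * L * 16) := by
      calc _ ≤ ∑ q ∈ (Icc 1 Z).filter Nat.Prime, (72 * L * 16) := by
            apply Finset.sum_le_sum
            intro q hq
            have hq2 := (mem_filter.1 hq).2.two_le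
            have m3 : ∑ j ∈ Ico 1 (X + 2), ∑ p ∈ TT (q ^ j) X, (1 / p : ℝ) ≤
                ∑ j ∈ Ico 1 (X + 2), 72 * L * (Real.log ((q ^ j : ℕ) : ℝ) / ((q ^ j : ℕ) : ℝ)) := by
              apply Finset.sum_le_sum
              intro j hj
              apply hS
              exact hq2.trans (Nat.le_self_pow (by have := (mem_Ico.1 hj).1; omega) q)
            rw [← mul_sum] at m3
            refine (mul_le_mul_of_nonneg_left m3 (Real.log_natCast_nonneg q)).trans ?_
            rw [mul_left_comm]
            exact mul_le_mul_of_nonneg_left (small_sum_bd q (X + 2) hq2) (by positivity)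
        _ ≤ _ := by
            rw [Finset.sum_const, nsmul_eq_mul]
            apply mul_le_mul_of_nonneg_right _ (by positivity)
            have := card_filter_le (Icc 1 Z) Nat.Prime
            rw [Nat.card_Icc] at this
            exact_mod_cast this
    have m4 := m1.trans ((bad2 o P h X Z).trans
      (mul_le_mul_of_nonneg_left m2 (Nat.cast_nonneg X)))
    have m5 : (X:ℝ) * (Z * (72 * L * 16)) ≤ (x * (ε / 2)) * (3 * L ^ 4) := by
      calc _ ≤ x * (L ^ (14 / 5 : ℝ) * (72 * L * 16)) := by gcongr
        _ = x * (384 * L ^ (-(1 / 5) : ℝ)) * (3 * L ^ 4) := by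
            have : L ^ (14 / 5 : ℝ) * L = L ^ (-(1 / 5) : ℝ) * L ^ 4 := by
              rw [← Real.rpow_natCast L 4]
              nth_rewrite 2 [← Real.rpow_one L]
              rw [← Real.rpow_add hL0, ← Real.rpow_add hL0]; norm_num
            linear_combination (1152 * x) * this
        _ ≤ _ := by gcongr
    have m6 := le_of_mul_le_mul_right (m4.trans m5) (by positivity)
    linarith
  have hsub : {N : ℕ | 1 ≤ N ∧ (N : ℝ) ≤ x ∧ (k N : ℝ) < (∏ p ∈ P N, (o p : ℝ)) /
      Real.exp (3 * L ^ 4)} ⊆ ((B1 ∪ B2 : Finset ℕ) : Set ℕ) := by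
    rintro N ⟨hN, hNx, hlt⟩
    have hNX : N ∈ Ioc 0 X := mem_Ioc.2 ⟨hN, Nat.le_floor hNx⟩
    rw [mem_coe, mem_union]
    by_cases hb : N ∈ B1
    · exact Or.inl hb
    right
    rw [hB1, mem_filter, not_and] at hb
    have hle := prod_le_of_not_bad o (P N) (k N) Z (hk N hN)
      (fun p hp => (h N hN p hp).2.2.2.1) (hok N hN) (hb hNX)
    have hle' : (∏ p ∈ P N, (o p : ℝ)) ≤ k N * ∏ p ∈ P N, (smP Z (o p) : ℝ) := by
      exact_mod_cast hle
    rw [hB2, mem_filter]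
    refine ⟨hNX, ?_⟩
    rw [lt_div_iff₀ (Real.exp_pos _)] at hlt
    have hk0 : (0:ℝ) < k N := by exact_mod_cast hk N hN
    have h3 := lt_of_mul_lt_mul_left (hlt.trans_le hle') hk0.le
    have h4 := Real.log_le_log (Real.exp_pos _) h3.le
    rw [Real.log_exp, Real.log_prod] at h4
    · exact h4
    · intro p _
      exact_mod_cast (smP_pos Z (o p)).ne'
  have hcard := Set.ncard_le_ncard hsub (Finset.finite_toSet _)
  rw [Set.ncard_coe_finset] at hcard
  have hc' : (({N : ℕ | 1 ≤ N ∧ (N : ℝ) ≤ x ∧ (k N : ℝ) < (∏ p ∈ P N, (o p : ℝ)) /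
      Real.exp (3 * L ^ 4)}.ncard : ℕ) : ℝ) ≤ B1.card + B2.card := by
    exact_mod_cast hcard.trans (card_union_le _ _)
  refine hc'.trans ?_
  linarith

/-- For all but `o(x)` of the `N ≤ x`,
`ord(A,N) ≥ (∏_{p ∣ d₀(N)} ord(A,p)) / exp(3 (log log x)⁴)`. -/
theorem order_ge_prod_for_most
    (A : Matrix (Fin 2) (Fin 2) ℤ) (hA : A.det = 1) (htr : 2 < |A.trace|) :
    ∀ ε : ℝ, 0 < ε → ∃ x₀ : ℝ, ∀ x : ℝ, x₀ ≤ x →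
      ({N : ℕ | 1 ≤ N ∧ (N : ℝ) ≤ x ∧
          (matOrd A N : ℝ) <
            (∏ p ∈ (dZero A N).primeFactors, (matOrd A p : ℝ)) /
              Real.exp (3 * Real.log (Real.log x) ^ 4)}.ncard : ℝ) ≤
        ε * x := by
  apply main_count (fun p => matOrd A p) (fun N => (dZero A N).primeFactors) ?_
    (fun N => matOrd A N)
  · intro N hN
    exact (matOrd_spec A hA N hN).1
  · intro N hN p hp
    exact matOrd_dvd_of_dvd A hA N p hN (dZero_prop A N p hp).2.1
  · intro N hN p hp
    obtain ⟨h1, h2, h3⟩ := dZero_prop A N p hp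
    obtain ⟨h4, h5⟩ := matOrd_prime A hA p h1 h3
    exact ⟨h1, h2, h4, (matOrd_spec A hA p h1.pos).1, h5⟩
end
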